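/- arXiv:2504.15775 — 4 statements merged into one kernel-verified Lean document; each statement's English description precedes it below -/
import Mathlib

section
/- Let R be a commutative ring in which every maximal ideal is finitely generated. Then R is an almost V-ring if and only if R is a quasi V-ring and the socle of R (the sum of all minimal ideals of R) is an almost injective R-module. -/
universe u v w v'

section LeftDefs
variable (R : Type u) [Ring R]

/-- A (left) `R`-module `M` is mininjective if every homomorphism from a minimal (left)
ideal `I` of `R` into `M` extends to a homomorphism `R → M`. -/
def IsMininjectiveLeft (M : Type v) [AddCommGroup M] [Module R M] : Prop :=
  ∀ I : Submodule R R, IsAtom I → ∀ f : ↥I →ₗ[R] M,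
    ∃ g : R →ₗ[R] M, ∀ x : ↥I, g ↑x = f x

/-- A (left) `R`-module `M` is min-projective if every short exact sequence
`0 → N → X → M → 0` with `N` mininjective splits (equivalently `Ext¹(M, N) = 0` for
every mininjective `N`). -/
def IsMinProjectiveLeft (M : Type v) [AddCommGroup M] [Module R M] : Prop :=
  ∀ (X : Type (max u v)) [AddCommGroup X] [Module R X] (p : X →ₗ[R] M),
    Function.Surjective p → IsMininjectiveLeft R ↥(LinearMap.ker p) →
      ∃ s : M →ₗ[R] X, p ∘ₗ s = LinearMap.id

/-- `R` is strongly min-coherent if every minimal (left) ideal of `R` is min-projective. -/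
def StronglyMinCoherentLeft : Prop :=
  ∀ I : Submodule R R, IsAtom I → IsMinProjectiveLeft R ↥I

/-- `R` is a quasi V-ring if every simple `R`-module which is not isomorphic to
any ideal of `R` is injective. -/
def QuasiVRingLeft : Prop :=
  ∀ (S : Type v) [AddCommGroup S] [Module R S], IsSimpleModule R S →
    (¬ ∃ I : Submodule R R, Nonempty (S ≃ₗ[R] ↥I)) → Module.Injective R S

/-- `R` is a Kasch ring if every simple `R`-module is isomorphic to an ideal of `R`. -/
def KaschLeft : Prop :=
  ∀ (S : Type v) [AddCommGroup S] [Module R S], IsSimpleModule R S →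
    ∃ I : Submodule R R, Nonempty (S ≃ₗ[R] ↥I)

/-- An `R`-module `M` is almost injective if for every monomorphism `i : A → B` and every
`f : A → M`, either `f` extends to `B`, or there are a nonzero direct summand `D` of `B`
(with projection `π : B → D`) and `h : M → D` with `h ∘ f = π ∘ i`. -/
def IsAlmostInjectiveLeft (M : Type v) [AddCommGroup M] [Module R M] : Prop :=
  ∀ (A B : Type w) [AddCommGroup A] [AddCommGroup B] [Module R A] [Module R B]
    (i : A →ₗ[R] B), Function.Injective i → ∀ f : A →ₗ[R] M,
    (∃ g : B →ₗ[R] M, g ∘ₗ i = f) ∨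
    (∃ D : Submodule R B, D ≠ ⊥ ∧ ∃ π : B →ₗ[R] ↥D,
      π ∘ₗ D.subtype = LinearMap.id ∧ ∃ h : M →ₗ[R] ↥D, h ∘ₗ f = π ∘ₗ i)

/-- `R` is an almost V-ring if every simple `R`-module is almost injective. -/
def AlmostVRingLeft : Prop :=
  ∀ (S : Type v) [AddCommGroup S] [Module R S], IsSimpleModule R S →
    IsAlmostInjectiveLeft.{u, v, w} R S

end LeftDefs

/-!
Suppose a map `f : A → M` into an almost injective module does not extend along `i : A → B`. Choose
`C ≤ B` maximal with `C ⊓ i(A) = ⊥` and apply almost injectivity to `A × C → B`: the resulting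
summand `D` cannot meet the essential submodule `i(A) ⊔ C` trivially, so `h : M → D` satisfies
`h ∘ f ≠ 0`. For `M` simple and `B = R`, the map `h` embeds `M` in `R`, hence almost V-rings are
quasi V-rings. For `M = R ⧸ m` and `A = R x` with `x ∈ m` and `Ann x ≤ m`, the idempotent cutting
out `D` annihilates `x ^ 2` but does not lie in `m`, so `m` contains no smaller prime. By Cohen's
theorem an almost V-ring with finitely generated maximal ideals is noetherian, and its socle is a
finite product of simple modules. Conversely, every minimal ideal is a direct summand of the socle.
-/

theorem exists_disjoint_and_forall_disjoint_sup_eq_bot {α : Type*} [CompleteLattice α]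
    [IsModularLattice α] [IsCompactlyGenerated α] (a : α) :
    ∃ c, Disjoint a c ∧ ∀ b, Disjoint (a ⊔ c) b → b = ⊥ := by
  obtain ⟨c, hc⟩ := zorn_le₀ {c : α | Disjoint a c} fun s hs hchain ↦
    ⟨sSup s, hchain.directedOn.disjoint_sSup_right.2 fun _ hb ↦ hs hb, fun _ ↦ le_sSup⟩
  refine ⟨c, hc.prop, fun b hb ↦ (hb.mono_left le_sup_right).eq_bot_of_ge ?_⟩
  have hcb : Disjoint a (c ⊔ b) := hc.prop.disjoint_sup_right_of_disjoint_sup_left hb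
  exact le_sup_right.trans (hc.le_of_ge hcb le_sup_left)

section Ring

variable {R : Type u} [Ring R]

theorem isSemisimpleModule_sSup_isAtom (M : Type*) [AddCommGroup M] [Module R M] :
    IsSemisimpleModule R ↥(sSup {N : Submodule R M | IsAtom N}) := by
  rw [sSup_eq_iSup]
  refine isSemisimpleModule_biSup_of_isSemisimpleModule_submodule fun N hN ↦ ?_
  have : IsSimpleModule R N := isSimpleModule_iff_isAtom.2 hN
  infer_instance

namespace IsAlmostInjectiveLeft

variable {M : Type v} [AddCommGroup M] [Module R M]

theorem of_moduleInjective [Module.Injective R M] : IsAlmostInjectiveLeft.{u, v, v} R M := by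
  intro A B _ _ _ _ i hi f
  obtain ⟨g, hg⟩ := Module.Injective.out i hi f
  exact Or.inl ⟨g, LinearMap.ext hg⟩

theorem of_retract {N : Type v'} [AddCommGroup N] [Module R N]
    (hM : IsAlmostInjectiveLeft.{u, v, w} R M) (s : N →ₗ[R] M) (p : M →ₗ[R] N)
    (hps : p ∘ₗ s = LinearMap.id) : IsAlmostInjectiveLeft.{u, v', w} R N := by
  intro A B _ _ _ _ i hi f
  obtain ⟨g, hg⟩ | ⟨D, hD, π, hπ, h, hh⟩ := hM A B i hi (s ∘ₗ f)
  · refine Or.inl ⟨p ∘ₗ g, ?_⟩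
    rw [LinearMap.comp_assoc, hg, ← LinearMap.comp_assoc, hps, LinearMap.id_comp]
  · exact Or.inr ⟨D, hD, π, hπ, h ∘ₗ s, by rw [LinearMap.comp_assoc, hh]⟩

theorem of_linearEquiv {N : Type v'} [AddCommGroup N] [Module R N]
    (hM : IsAlmostInjectiveLeft.{u, v, w} R M) (e : M ≃ₗ[R] N) :
    IsAlmostInjectiveLeft.{u, v', w} R N :=
  hM.of_retract e.symm.toLinearMap e.toLinearMap e.comp_symm

theorem of_injective_linearMap [IsSemisimpleModule R M] {N : Type v'} [AddCommGroup N] [Module R N]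
    (hM : IsAlmostInjectiveLeft.{u, v, w} R M) (s : N →ₗ[R] M) (hs : Function.Injective s) :
    IsAlmostInjectiveLeft.{u, v', w} R N := by
  obtain ⟨p, hps⟩ := IsSemisimpleModule.extension_property s hs LinearMap.id
  exact hM.of_retract s p hps

theorem pi {ι : Type v'} {N : ι → Type v} [∀ j, AddCommGroup (N j)] [∀ j, Module R (N j)]
    (hN : ∀ j, IsAlmostInjectiveLeft.{u, v, w} R (N j)) :
    IsAlmostInjectiveLeft.{u, max v' v, w} R (∀ j, N j) := by
  intro A B _ _ _ _ i hi f
  by_cases hext : ∀ j, ∃ g : B →ₗ[R] N j, g ∘ₗ i = LinearMap.proj j ∘ₗ f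
  · choose g hg using hext
    exact Or.inl ⟨LinearMap.pi g, LinearMap.ext fun a ↦ funext fun j ↦ congr($(hg j) a)⟩
  · obtain ⟨j, hj⟩ := not_forall.1 hext
    obtain ⟨D, hD, π, hπ, h, hh⟩ := (hN j A B i hi (LinearMap.proj j ∘ₗ f)).resolve_left hj
    exact Or.inr ⟨D, hD, π, hπ, h ∘ₗ LinearMap.proj j, by rw [LinearMap.comp_assoc, hh]⟩

theorem exists_comp_ne_zero_of_not_extends (hM : IsAlmostInjectiveLeft.{u, v, w} R M)
    {A B : Type w} [AddCommGroup A] [AddCommGroup B] [Module R A] [Module R B] {i : A →ₗ[R] B}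
    (hi : Function.Injective i) {f : A →ₗ[R] M} (hf : ¬ ∃ g : B →ₗ[R] M, g ∘ₗ i = f) :
    ∃ (D : Submodule R B) (π : B →ₗ[R] D) (h : M →ₗ[R] D),
      π ∘ₗ D.subtype = LinearMap.id ∧ h ∘ₗ f = π ∘ₗ i ∧ h ∘ₗ f ≠ 0 := by
  obtain ⟨C, hC, hessential⟩ :=
    exists_disjoint_and_forall_disjoint_sup_eq_bot (LinearMap.range i)
  have hinj : Function.Injective (i.coprod C.subtype) := by
    rw [← LinearMap.ker_eq_bot, LinearMap.ker_coprod_of_disjoint_range _ _ (by simpa using hC),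
      LinearMap.ker_eq_bot.2 hi, Submodule.ker_subtype, Submodule.prod_bot]
  have hf' : ¬ ∃ g, g ∘ₗ i.coprod C.subtype = f ∘ₗ LinearMap.fst R A C := by
    rintro ⟨g, hg⟩
    exact hf ⟨g, by simpa [LinearMap.comp_assoc] using congr($hg ∘ₗ LinearMap.inl R A C)⟩
  obtain ⟨D, hD, π, hπ, h, hh⟩ := (hM _ _ _ hinj (f ∘ₗ LinearMap.fst R A C)).resolve_left hf'
  have hhA : h ∘ₗ f = π ∘ₗ i := by
    simpa [LinearMap.comp_assoc] using congr($hh ∘ₗ LinearMap.inl R A C)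
  have hπC : π ∘ₗ C.subtype = 0 := by
    simpa [LinearMap.comp_assoc] using congr($hh.symm ∘ₗ LinearMap.inr R A C)
  refine ⟨D, π, h, hπ, hhA, fun hzero ↦ hD (hessential D ?_)⟩
  have hker : LinearMap.range i ⊔ C ≤ LinearMap.ker π :=
    sup_le (LinearMap.range_le_ker_iff.2 (hhA ▸ hzero)) fun c hc ↦ congr($hπC ⟨c, hc⟩)
  exact (LinearMap.isCompl_of_proj fun d ↦ congr($hπ d)).disjoint.symm.mono_left hker

theorem baer_of_not_linearEquiv_ideal [IsSimpleModule R M]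
    (hM : IsAlmostInjectiveLeft.{u, v, u} R M)
    (hne : ¬ ∃ I : Submodule R R, Nonempty (M ≃ₗ[R] ↥I)) : Module.Baer R M := by
  intro I f
  by_contra hf
  have hext : ¬ ∃ g : R →ₗ[R] M, g ∘ₗ I.subtype = f := fun ⟨g, hg⟩ ↦
    hf ⟨g, fun x hx ↦ congr($hg ⟨x, hx⟩)⟩
  obtain ⟨D, -, h, -, -, hhf⟩ := hM.exists_comp_ne_zero_of_not_extends I.injective_subtype hext
  have hD : Function.Injective (D.subtype ∘ₗ h) := D.injective_subtype.comp <|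
    LinearMap.injective_of_ne_zero fun h0 ↦ hhf (by rw [h0, LinearMap.zero_comp])
  exact hne ⟨_, ⟨LinearEquiv.ofInjective _ hD⟩⟩

theorem exists_isIdempotentElem_of_torsionOf_le (hM : IsAlmostInjectiveLeft.{u, v, u} R M)
    {x : R} {y : M} (hann : Ideal.torsionOf R R x ≤ Ideal.torsionOf R M y)
    (hy : ∀ z : M, x • z ≠ y) :
    ∃ e : R, IsIdempotentElem e ∧ ∃ h : M →ₗ[R] R, h y = x * e ∧ x * e ≠ 0 := by
  let i : (R ⧸ Ideal.torsionOf R R x) →ₗ[R] R :=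
    (Ideal.torsionOf R R x).liftQ (LinearMap.toSpanSingleton R R x) le_rfl
  let f : (R ⧸ Ideal.torsionOf R R x) →ₗ[R] M :=
    (Ideal.torsionOf R R x).liftQ (LinearMap.toSpanSingleton R M y) hann
  have hi : Function.Injective i :=
    LinearMap.ker_eq_bot.1 (Submodule.ker_liftQ_eq_bot _ _ le_rfl le_rfl)
  have hi_one : i (Submodule.Quotient.mk 1) = x := one_smul R x
  have hf_one : f (Submodule.Quotient.mk 1) = y := one_smul R y
  have hext : ¬ ∃ g : R →ₗ[R] M, g ∘ₗ i = f := by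
    rintro ⟨g, hg⟩
    apply hy (g 1)
    calc x • g 1 = g x := by rw [← map_smul, smul_eq_mul, mul_one]
      _ = g (i (Submodule.Quotient.mk 1)) := by rw [hi_one]
      _ = y := congr($hg (Submodule.Quotient.mk 1)).trans hf_one
  obtain ⟨D, π, h, hπ, hh, hhf⟩ := hM.exists_comp_ne_zero_of_not_extends hi hext
  have hπ_apply (r : R) : (π r : R) = r * (π 1 : R) := by
    rw [← smul_eq_mul, ← Submodule.coe_smul, ← map_smul, smul_eq_mul, mul_one]
  have hhy : h y = π x :=
    calc h y = h (f (Submodule.Quotient.mk 1)) := by rw [hf_one]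
      _ = π (i (Submodule.Quotient.mk 1)) := congr($hh (Submodule.Quotient.mk 1))
      _ = π x := congrArg π hi_one
  refine ⟨π 1, ?_, D.subtype ∘ₗ h, ?_, fun hx ↦ hhf ?_⟩
  · exact (hπ_apply _).symm.trans congr(($hπ (π 1) : R))
  · rw [← hπ_apply, ← hhy, LinearMap.comp_apply, Submodule.subtype_apply]
  · have hhy_zero : h y = 0 := by rw [hhy, ← Submodule.coe_eq_zero, hπ_apply, hx]
    exact Submodule.linearMap_qext _ <| LinearMap.ext_ring <|
      (congrArg h hf_one).trans hhy_zero

end IsAlmostInjectiveLeft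

namespace AlmostVRingLeft

theorem quasiVRingLeft (hR : AlmostVRingLeft.{u, v, u} R) : QuasiVRingLeft.{u, v} R :=
  fun S _ _ hS hne ↦ ((hR S hS).baer_of_not_linearEquiv_ideal hne).injective

theorem isAlmostInjectiveLeft_of_isSemisimpleModule (hR : AlmostVRingLeft.{u, v, w} R) (M : Type v)
    [AddCommGroup M] [Module R M] [IsSemisimpleModule R M] [Module.Finite R M] :
    IsAlmostInjectiveLeft.{u, v, w} R M := by
  obtain ⟨n, S, e, hS⟩ := IsSemisimpleModule.exists_linearEquiv_fin_dfinsupp R M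
  have hpi : IsAlmostInjectiveLeft.{u, v, w} R (∀ j, S j) := .pi fun j ↦ hR (S j) (hS j)
  exact hpi.of_linearEquiv (e ≪≫ₗ DFinsupp.linearEquivFunOnFintype).symm

end AlmostVRingLeft

end Ring

section CommRing

variable {R : Type u} [CommRing R]

namespace IsAlmostInjectiveLeft

variable {I : Ideal R}

theorem exists_notMem_mul_sq_eq_zero (hI : I ≠ ⊤)
    (hinj : IsAlmostInjectiveLeft.{u, u, u} R (R ⧸ I)) {x : R} (hx : x ∈ I) :
    ∃ e ∉ I, e * x ^ 2 = 0 := by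
  have hsmul {r : R} (hr : r ∈ I) (y : R ⧸ I) : r • y = 0 := by
    rw [Algebra.smul_def, Ideal.Quotient.algebraMap_eq, Ideal.Quotient.eq_zero_iff_mem.2 hr,
      zero_mul]
  by_cases hann : Ideal.torsionOf R R x ≤ I
  · have : Nontrivial (R ⧸ I) := Ideal.Quotient.nontrivial_iff.2 hI
    have hann' : Ideal.torsionOf R R x ≤ Ideal.torsionOf R (R ⧸ I) 1 := fun r hr ↦
      (Ideal.mem_torsionOf_iff _ r).2 (hsmul (hann hr) 1)
    obtain ⟨e, he, h, hh, hxe⟩ := hinj.exists_isIdempotentElem_of_torsionOf_le hann' fun z hz ↦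
      one_ne_zero (hz.symm.trans (hsmul hx z))
    have hmul {r : R} (hr : r ∈ I) : r * (x * e) = 0 := by
      rw [← hh, ← smul_eq_mul, ← map_smul, hsmul hr, map_zero]
    refine ⟨e, fun heI ↦ hxe ?_, by linear_combination hmul hx⟩
    rw [← hmul heI, mul_left_comm, he.eq]
  · obtain ⟨e, hex, heI⟩ := SetLike.not_le_iff_exists.1 hann
    rw [Ideal.mem_torsionOf_iff, smul_eq_mul] at hex
    exact ⟨e, heI, by rw [pow_two, ← mul_assoc, hex, zero_mul]⟩

theorem eq_of_isPrime_of_le (hinj : IsAlmostInjectiveLeft.{u, u, u} R (R ⧸ I)) (hI : I ≠ ⊤)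
    {p : Ideal R} [hp : p.IsPrime] (hpI : p ≤ I) : p = I := by
  refine le_antisymm hpI fun x hx ↦ ?_
  obtain ⟨e, heI, hex⟩ := hinj.exists_notMem_mul_sq_eq_zero hI hx
  exact hp.mem_of_pow_mem 2 <|
    (hp.mem_or_mem (hex ▸ p.zero_mem)).resolve_left fun hep ↦ heI (hpI hep)

end IsAlmostInjectiveLeft

theorem AlmostVRingLeft.isMaximal_of_isPrime (hR : AlmostVRingLeft.{u, u, u} R) (p : Ideal R)
    [hp : p.IsPrime] : p.IsMaximal := by
  obtain ⟨m, hm, hpm⟩ := p.exists_le_maximal hp.ne_top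
  have hsimple : IsSimpleModule R (R ⧸ m) := isSimpleModule_iff_isCoatom.2 hm.out
  exact (hR _ hsimple).eq_of_isPrime_of_le hm.ne_top hpm ▸ hm

theorem AlmostVRingLeft.isNoetherianRing (hR : AlmostVRingLeft.{u, u, u} R)
    (hfg : ∀ I : Ideal R, I.IsMaximal → I.FG) : IsNoetherianRing R :=
  .of_prime fun p _ ↦ hfg p (hR.isMaximal_of_isPrime p)

end CommRing

/-- For a commutative ring `R` in which every maximal ideal is finitely
generated, `R` is an almost V-ring iff `R` is a quasi V-ring and the socle of `R` is
almost injective. -/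
theorem almostVRing_iff_quasiVRing_and_socle_almostInjective (R : Type u) [CommRing R]
    (hN : ∀ I : Ideal R, I.IsMaximal → I.FG) :
    AlmostVRingLeft.{u, u, u} R ↔
      (QuasiVRingLeft.{u, u} R ∧
        IsAlmostInjectiveLeft.{u, u, u} R ↥(sSup {I : Submodule R R | IsAtom I})) := by
  have hsocle := isSemisimpleModule_sSup_isAtom (R := R) R
  constructor
  · intro hR
    have := hR.isNoetherianRing hN
    exact ⟨hR.quasiVRingLeft, hR.isAlmostInjectiveLeft_of_isSemisimpleModule _⟩
  · rintro ⟨hquasi, hinj⟩ S _ _ hS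
    by_cases hideal : ∃ I : Submodule R R, Nonempty (S ≃ₗ[R] ↥I)
    · obtain ⟨I, ⟨e⟩⟩ := hideal
      have hI : IsAtom I := isSimpleModule_iff_isAtom.1 (IsSimpleModule.congr e.symm)
      exact hinj.of_injective_linearMap (Submodule.inclusion (le_sSup hI) ∘ₗ e.toLinearMap)
        ((Submodule.inclusion_injective (le_sSup hI)).comp e.injective)
    · have := hquasi S hS hideal
      exact .of_moduleInjective
end

section
/- Let R be a commutative ring in which every maximal ideal is finitely generated. Then R is an almost V-ring if and only if R is a quasi-Frobenius serial ring with J(R)² = 0, where J(R) is the Jacobson radical of R. -/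
universe u v w v'

/-!
Each side says that `R` is Artinian with every localization `R_𝔪` of length at most two.

If the residue field `k` of a local ring `L` with finitely generated maximal ideal `𝔪 ≠ 0` is
almost injective, apply the definition to the inclusion `𝔪 → L` and a surjection `f : 𝔪 → k`. An
extension of `f` to `L` would kill `𝔪`, so the second alternative holds; the only nonzero direct
summand of `L` is `L` itself, so the inclusion of `𝔪` factors through `f`, and `𝔪 ≅ k`.
Such an `L` satisfies `𝔪² = 0`, is uniserial and, by Baer's criterion, self-injective.

Conversely, over an Artinian `R` each `R_𝔪` is a direct factor of `R`. When it has length at most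
two it is projective and injective, and its proper submodules all lie in one submodule isomorphic
to `R/𝔪`, which makes `R/𝔪` almost injective.
-/

open IsLocalRing

/-- A module is uniserial if its submodules are totally ordered by inclusion. -/
def IsUniserial (R : Type*) [Ring R] (M : Type*) [AddCommGroup M] [Module R M] : Prop :=
  ∀ N P : Submodule R M, N ≤ P ∨ P ≤ N

/-- A module is serial if it is a finite internal direct sum of uniserial submodules. -/
def IsSerial (R : Type*) [Ring R] (M : Type*) [AddCommGroup M] [Module R M] : Prop :=
  ∃ (n : ℕ) (c : Fin n → Submodule R M), DirectSum.IsInternal c ∧ ∀ i, IsUniserial R (c i)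

section Uniserial

variable {R : Type*} [Ring R] {M N : Type*} [AddCommGroup M] [Module R M]
  [AddCommGroup N] [Module R N]

theorem IsUniserial.of_surjective (hM : IsUniserial R M) {f : M →ₗ[R] N}
    (hf : Function.Surjective f) : IsUniserial R N := fun P Q ↦
  (hM (P.comap f) (Q.comap f)).imp (Submodule.comap_le_comap_iff_of_surjective hf).mp
    (Submodule.comap_le_comap_iff_of_surjective hf).mp

theorem isUniserial_iff_of_algebraMap_surjective {R L : Type*} [CommRing R] [Ring L] [Algebra R L]
    {M : Type*} [AddCommGroup M] [Module R M] [Module L M] [IsScalarTower R L M]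
    (h : Function.Surjective (algebraMap R L)) : IsUniserial R M ↔ IsUniserial L M := by
  let e := Submodule.orderIsoOfAlgebraMapSurjective (M := M) h
  refine ⟨fun hM P Q ↦ ?_, fun hM P Q ↦ ?_⟩
  · exact (hM (e P) (e Q)).imp e.le_iff_le.mp e.le_iff_le.mp
  · exact (hM (e.symm P) (e.symm Q)).imp e.symm.le_iff_le.mp e.symm.le_iff_le.mp

theorem isInternal_map_symm_range_single {ι : Type*} [Finite ι] [DecidableEq ι] {φ : ι → Type*}
    [∀ i, AddCommGroup (φ i)] [∀ i, Module R (φ i)] (e : M ≃ₗ[R] ∀ i, φ i) :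
    DirectSum.IsInternal fun i ↦
      (LinearMap.range (LinearMap.single R φ i)).map (e.symm : (∀ i, φ i) →ₗ[R] M) := by
  have hind : iSupIndep fun i ↦ LinearMap.range (LinearMap.single R φ i) := fun i ↦ by
    simpa using LinearMap.disjoint_single_single R φ {i} {i}ᶜ disjoint_compl_right
  refine (DirectSum.isInternal_submodule_iff_iSupIndep_and_iSup_eq_top _).mpr
    ⟨hind.map_orderIso (Submodule.orderIsoMapComap e.symm), ?_⟩
  rw [← Submodule.map_iSup, LinearMap.iSup_range_single, Submodule.map_top, LinearEquiv.range]

theorem IsSerial.of_linearEquiv_pi {ι : Type*} [Finite ι] {φ : ι → Type*}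
    [∀ i, AddCommGroup (φ i)] [∀ i, Module R (φ i)] (e : M ≃ₗ[R] ∀ i, φ i)
    (hφ : ∀ i, IsUniserial R (φ i)) : IsSerial R M := by
  classical
  obtain ⟨n, ⟨σ⟩⟩ := Finite.exists_equiv_fin ι
  let e' := e ≪≫ₗ (LinearEquiv.piCongrLeft R φ σ.symm).symm
  refine ⟨n, _, isInternal_map_symm_range_single e', fun i ↦ ?_⟩
  let incl := LinearMap.single R (fun j ↦ φ (σ.symm j)) i
  exact ((hφ (σ.symm i)).of_surjective (f := incl.rangeRestrict)
    incl.surjective_rangeRestrict).of_surjective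
    (f := (e'.symm.submoduleMap (LinearMap.range incl)).toLinearMap) (LinearEquiv.surjective _)

theorem IsSerial.isUniserial_of_algebraMap_surjective {R L : Type*} [CommRing R] [CommRing L]
    [IsLocalRing L] [Algebra R L] (hR : IsSerial R R) (hL : Function.Surjective (algebraMap R L)) :
    IsUniserial L L := by
  obtain ⟨n, c, hc, huni⟩ := hR
  obtain ⟨i, hi⟩ : ∃ i, Ideal.map (algebraMap R L) (c i) = ⊤ := by
    by_contra! hne
    have hle : ⨆ i, Ideal.map (algebraMap R L) (c i) ≤ maximalIdeal L :=
      iSup_le fun i ↦ le_maximalIdeal (hne i)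
    rw [← Ideal.map_iSup, hc.submodule_iSup_eq_top, Ideal.map_top, top_le_iff] at hle
    exact Ideal.IsPrime.ne_top' hle
  refine (isUniserial_iff_of_algebraMap_surjective hL).mp <|
    (huni i).of_surjective (f := Algebra.linearMap R L ∘ₗ (c i).subtype) fun y ↦ ?_
  obtain ⟨x, hx, rfl⟩ := (Ideal.mem_map_iff_of_surjective _ hL).mp (hi ▸ Submodule.mem_top (x := y))
  exact ⟨⟨x, hx⟩, rfl⟩

end Uniserial

section AlmostInjective

theorem injective_of_leftInverse {R : Type*} [Ring R] {M N : Type v} [AddCommGroup M] [Module R M]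
    [AddCommGroup N] [Module R N] [Module.Injective R M] (s : N →ₗ[R] M) (r : M →ₗ[R] N)
    (h : r ∘ₗ s = LinearMap.id) : Module.Injective R N := by
  refine ⟨fun A B _ _ _ _ i hi f ↦ ?_⟩
  obtain ⟨g, hg⟩ := Module.Injective.out i hi (s ∘ₗ f)
  refine ⟨r ∘ₗ g, fun a ↦ ?_⟩
  rw [LinearMap.comp_apply, hg]
  exact LinearMap.congr_fun h (f a)

theorem isAlmostInjectiveLeft_iff_exists_isIdempotentElem {R : Type u} [Ring R] {M : Type v}
    [AddCommGroup M] [Module R M] :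
    IsAlmostInjectiveLeft.{u, v, w} R M ↔
      ∀ (A B : Type w) [AddCommGroup A] [AddCommGroup B] [Module R A] [Module R B]
        (i : A →ₗ[R] B), Function.Injective i → ∀ f : A →ₗ[R] M,
        (∃ g : B →ₗ[R] M, g ∘ₗ i = f) ∨
        ∃ p : Module.End R B, IsIdempotentElem p ∧ p ≠ 0 ∧
          ∃ h : M →ₗ[R] B, h ∘ₗ f = p ∘ₗ i := by
  refine ⟨fun hM A B _ _ _ _ i hi f ↦ (hM A B i hi f).imp_right ?_,
    fun hM A B _ _ _ _ i hi f ↦ (hM A B i hi f).imp_right ?_⟩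
  · rintro ⟨D, hD, π, hπ, h, hh⟩
    have hπD (d : D) : π d = d := LinearMap.congr_fun hπ d
    refine ⟨D.subtype ∘ₗ π, LinearMap.ext fun b ↦ congrArg D.subtype (hπD (π b)), fun h0 ↦ hD ?_,
      D.subtype ∘ₗ h, by rw [LinearMap.comp_assoc, hh, LinearMap.comp_assoc]⟩
    exact (Submodule.eq_bot_iff D).mpr fun d hd ↦
      (congrArg D.subtype (hπD ⟨d, hd⟩)).symm.trans (LinearMap.congr_fun h0 d)
  · rintro ⟨p, hp, hp0, h, hh⟩
    have hpp (b : B) : p (p b) = p b := LinearMap.congr_fun hp b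
    refine ⟨LinearMap.range p, mt LinearMap.range_eq_bot.mp hp0, p.rangeRestrict, ?_,
      p.rangeRestrict ∘ₗ h, ?_⟩
    · ext ⟨_, b, rfl⟩
      exact hpp b
    · rw [LinearMap.comp_assoc, hh]
      ext a
      exact hpp (i a)

theorem IsAlmostInjectiveLeft.of_linearEquiv_s4 {R : Type u} [Ring R] {M N : Type v}
    [AddCommGroup M] [Module R M] [AddCommGroup N] [Module R N] (e : M ≃ₗ[R] N)
    (hM : IsAlmostInjectiveLeft.{u, v, w} R M) : IsAlmostInjectiveLeft.{u, v, w} R N := by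
  intro A B _ _ _ _ i hi f
  refine (hM A B i hi (e.symm.toLinearMap ∘ₗ f)).imp ?_ ?_
  · rintro ⟨g, hg⟩
    refine ⟨e.toLinearMap ∘ₗ g, ?_⟩
    rw [LinearMap.comp_assoc, hg, ← LinearMap.comp_assoc, e.comp_symm, LinearMap.id_comp]
  · rintro ⟨D, hD, π, hπ, h, hh⟩
    exact ⟨D, hD, π, hπ, h ∘ₗ e.symm.toLinearMap, by rw [LinearMap.comp_assoc, hh]⟩

-- Extend `f : A → S` to `g : B → E`. If the range of `g` is not inside `S`, then `g` is onto
-- and splits.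
theorem isAlmostInjectiveLeft_of_forall_ne_top_le {R : Type u} [Ring R] {E : Type v}
    [AddCommGroup E] [Module R E] [Module.Projective R E] [Module.Injective R E]
    {S : Submodule R E} (hS : ∀ N : Submodule R E, N ≠ ⊤ → N ≤ S) :
    IsAlmostInjectiveLeft.{u, v, v} R S := by
  refine isAlmostInjectiveLeft_iff_exists_isIdempotentElem.mpr fun A B _ _ _ _ i hi f ↦ ?_
  obtain ⟨g, hg⟩ := Module.Injective.out i hi (S.subtype ∘ₗ f)
  by_cases hgS : LinearMap.range g ≤ S
  · exact .inl ⟨g.codRestrict S fun b ↦ hgS ⟨b, rfl⟩, LinearMap.ext fun a ↦ Subtype.ext (hg a)⟩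
  have hrange : LinearMap.range g = ⊤ := of_not_not fun hne ↦ hgS (hS _ hne)
  obtain ⟨s, hs⟩ := Module.projective_lifting_property g LinearMap.id
    (LinearMap.range_eq_top.mp hrange)
  have hgs (x : E) : g (s x) = x := LinearMap.congr_fun hs x
  refine .inr ⟨s ∘ₗ g, LinearMap.ext fun b ↦ congrArg s (hgs (g b)), fun h0 ↦ hgS ?_,
    s ∘ₗ S.subtype, LinearMap.ext fun a ↦ congrArg s (hg a).symm⟩
  rintro _ ⟨b, rfl⟩
  have hsgb : s (g b) = 0 := LinearMap.congr_fun h0 b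
  have hgb : g b = 0 := by rw [← hgs (g b), hsgb, map_zero]
  exact hgb ▸ S.zero_mem

theorem IsAlmostInjectiveLeft.of_isLocalization {R : Type u} [CommRing R] (S : Submonoid R)
    (L : Type v') [CommRing L] [Algebra R L] [IsLocalization S L] {M : Type v} [AddCommGroup M]
    [Module R M] [Module L M] [IsScalarTower R L M] (hM : IsAlmostInjectiveLeft.{u, v, w} R M) :
    IsAlmostInjectiveLeft.{v', v, w} L M := by
  refine isAlmostInjectiveLeft_iff_exists_isIdempotentElem.mpr fun A B _ _ _ _ i hi f ↦ ?_
  let _ : Module R A := Module.compHom A (algebraMap R L)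
  let _ : Module R B := Module.compHom B (algebraMap R L)
  have : IsScalarTower R L A := .of_algebraMap_smul fun _ _ ↦ rfl
  have : IsScalarTower R L B := .of_algebraMap_smul fun _ _ ↦ rfl
  refine (isAlmostInjectiveLeft_iff_exists_isIdempotentElem.mp hM A B (i.restrictScalars R) hi
    (f.restrictScalars R)).imp ?_ ?_
  · rintro ⟨g, hg⟩
    exact ⟨g.extendScalarsOfIsLocalization S L, LinearMap.ext fun a ↦ LinearMap.congr_fun hg a⟩
  · rintro ⟨p, hp, hp0, h, hh⟩
    exact ⟨p.extendScalarsOfIsLocalization S L, LinearMap.ext fun b ↦ LinearMap.congr_fun hp b,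
      fun h0 ↦ hp0 (LinearMap.ext fun b ↦ LinearMap.congr_fun h0 b),
      h.extendScalarsOfIsLocalization S L, LinearMap.ext fun a ↦ LinearMap.congr_fun hh a⟩

end AlmostInjective

/-- A local ring whose maximal ideal is zero or simple, i.e. a local ring of length at most two.
This is the condition on the localizations of `R` to which both sides of the theorem reduce. -/
def HasMinimalMaximalIdeal (L : Type*) [CommRing L] [IsLocalRing L] : Prop :=
  ∀ I < maximalIdeal L, I = ⊥

section LocalRing

variable {L : Type*} [CommRing L] [IsLocalRing L]

theorem smul_residueField_eq_zero {x : L} (hx : x ∈ maximalIdeal L) (z : ResidueField L) :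
    x • z = 0 := by
  rw [Algebra.smul_def, ResidueField.algebraMap_eq, (residue_eq_zero_iff x).mpr hx, zero_mul]

theorem exists_surjective_residueField (M : Type*) [AddCommGroup M] [Module L M] [Module.Finite L M]
    [Nontrivial M] : ∃ f : M →ₗ[L] ResidueField L, Function.Surjective f := by
  obtain ⟨N, hN, -⟩ :=
    (eq_top_or_exists_le_coatom (⊥ : Submodule L M)).resolve_left bot_ne_top
  obtain ⟨I, hI, ⟨e⟩⟩ := isSimpleModule_iff_quot_maximal.mp (isSimpleModule_iff_isCoatom.mpr hN)
  obtain rfl := eq_maximalIdeal hI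
  exact ⟨e.toLinearMap ∘ₗ N.mkQ, e.surjective.comp N.mkQ_surjective⟩

theorem eq_id_of_isIdempotentElem_end {p : Module.End L L} (hp : IsIdempotentElem p)
    (hp0 : p ≠ 0) : p = LinearMap.id := by
  have hp1 (x : L) : p x = x * p 1 := by rw [← smul_eq_mul, ← map_smul, smul_eq_mul, mul_one]
  have hmul : p 1 * p 1 = p 1 := by rw [← hp1]; exact LinearMap.congr_fun hp 1
  have hidem : p 1 * (1 - p 1) = 0 := by rw [mul_sub, mul_one, hmul, sub_self]
  refine LinearMap.ext_ring ?_
  rcases isUnit_or_isUnit_one_sub_self (p 1) with hu | hu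
  · exact (sub_eq_zero.mp (hu.mul_right_eq_zero.mp hidem)).symm
  · exact absurd (LinearMap.ext_ring (hu.mul_left_eq_zero.mp hidem)) hp0

end LocalRing

namespace HasMinimalMaximalIdeal

section

variable {L : Type*} [CommRing L] [IsLocalRing L]

theorem of_injective {f : maximalIdeal L →ₗ[L] ResidueField L} (hf : Function.Injective f) :
    HasMinimalMaximalIdeal L := by
  intro I hI
  obtain ⟨y, hy, hyI⟩ := SetLike.exists_of_lt hI
  refine (Submodule.eq_bot_iff I).mpr fun x hx ↦ of_not_not fun hx0 ↦ hyI ?_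
  have hfx : f ⟨x, hI.le hx⟩ ≠ 0 := fun h ↦ hx0 (congrArg Subtype.val
    ((map_eq_zero_iff f hf).mp h))
  obtain ⟨l, hl⟩ := residue_surjective (f ⟨y, hy⟩ / f ⟨x, hI.le hx⟩)
  have hxy : f (l • ⟨x, hI.le hx⟩) = f ⟨y, hy⟩ := by
    rw [map_smul, Algebra.smul_def, ResidueField.algebraMap_eq, hl, div_mul_cancel₀ _ hfx]
  have hlx : l * x = y := congrArg Subtype.val (hf hxy)
  exact hlx ▸ I.mul_mem_left l hx

theorem of_isUniserial (hL : IsUniserial L L) (hsq : maximalIdeal L ^ 2 = ⊥) :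
    HasMinimalMaximalIdeal L := by
  intro I hI
  obtain ⟨y, hy, hyI⟩ := SetLike.exists_of_lt hI
  refine (Submodule.eq_bot_iff I).mpr fun x hx ↦ ?_
  have hIy : I ≤ Ideal.span {y} :=
    (hL I (Ideal.span {y})).resolve_right fun h ↦ hyI (h (Ideal.mem_span_singleton_self y))
  obtain ⟨l, rfl⟩ := Ideal.mem_span_singleton'.mp (hIy hx)
  have hl : l ∈ maximalIdeal L := fun hu ↦ hyI ((I.unit_mul_mem_iff_mem hu).mp hx)
  rw [← Ideal.mem_bot, ← hsq, pow_two]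
  exact Ideal.mul_mem_mul hl hy

theorem eq_bot_or_eq_of_ne_top (hL : HasMinimalMaximalIdeal L) {I : Ideal L} (hI : I ≠ ⊤) :
    I = ⊥ ∨ I = maximalIdeal L :=
  (le_maximalIdeal hI).lt_or_eq.imp_left (hL I)

theorem isUniserial (hL : HasMinimalMaximalIdeal L) : IsUniserial L L := by
  intro I J
  rcases eq_or_ne I ⊤ with rfl | hI
  · exact .inr le_top
  rcases eq_or_ne J ⊤ with rfl | hJ
  · exact .inl le_top
  rcases hL.eq_bot_or_eq_of_ne_top hI with rfl | rfl
  · exact .inl bot_le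
  · exact .inr (le_maximalIdeal hJ)

theorem dvd (hL : HasMinimalMaximalIdeal L) {x y : L} (hx : x ∈ maximalIdeal L) (hx0 : x ≠ 0)
    (hy : y ∈ maximalIdeal L) : x ∣ y := by
  have hspan : Ideal.span {x} = maximalIdeal L :=
    (hL.eq_bot_or_eq_of_ne_top (Ideal.span_singleton_ne_top hx)).resolve_left
      (mt Ideal.span_singleton_eq_bot.mp hx0)
  rwa [← Ideal.mem_span_singleton, hspan]

theorem mul_eq_zero (hL : HasMinimalMaximalIdeal L) {x y : L} (hx : x ∈ maximalIdeal L)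
    (hy : y ∈ maximalIdeal L) : x * y = 0 := by
  by_contra hxy
  obtain ⟨l, hl⟩ := hL.dvd ((maximalIdeal L).mul_mem_right y hx) hxy hx
  have hunit : IsUnit (1 - y * l) :=
    isUnit_one_sub_self_of_mem_nonunits _ ((maximalIdeal L).mul_mem_right l hy)
  have hx0 : x = 0 := hunit.mul_left_eq_zero.mp (by linear_combination hl)
  exact hxy (by rw [hx0, zero_mul])

theorem injective_self (hL : HasMinimalMaximalIdeal L) : Module.Injective L L := by
  refine Module.Baer.injective fun I f ↦ ?_
  rcases eq_or_ne I ⊤ with rfl | hI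
  · exact ⟨f ∘ₗ Submodule.topEquiv.symm.toLinearMap, fun _ _ ↦ rfl⟩
  rcases eq_or_ne I ⊥ with rfl | hI0
  · exact ⟨0, fun x hx ↦ by rw [Subsingleton.elim (⟨x, hx⟩ : (⊥ : Ideal L)) 0, map_zero,
      LinearMap.zero_apply]⟩
  obtain ⟨x, hx, hx0⟩ := Submodule.exists_mem_ne_zero_of_ne_bot hI0
  have hI𝔪 : I ≤ maximalIdeal L := le_maximalIdeal hI
  have hxf : x * f ⟨x, hx⟩ = 0 := by
    have hxx : x • (⟨x, hx⟩ : I) = 0 := Subtype.ext (hL.mul_eq_zero (hI𝔪 hx) (hI𝔪 hx))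
    rw [← smul_eq_mul, ← map_smul, hxx, map_zero]
  have hf : f ⟨x, hx⟩ ∈ maximalIdeal L := fun hu ↦ hx0 (hu.mul_left_eq_zero.mp hxf)
  obtain ⟨l, hl⟩ := hL.dvd (hI𝔪 hx) hx0 hf
  refine ⟨LinearMap.toSpanSingleton L L l, fun z hz ↦ ?_⟩
  obtain ⟨k, rfl⟩ := hL.dvd (hI𝔪 hx) hx0 (hI𝔪 hz)
  have hz' : (⟨x * k, hz⟩ : I) = k • ⟨x, hx⟩ := Subtype.ext (mul_comm x k)
  rw [hz', map_smul, hl, LinearMap.toSpanSingleton_apply, smul_eq_mul, smul_eq_mul]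
  ring

theorem exists_forall_ne_top_le_span (hL : HasMinimalMaximalIdeal L) :
    ∃ x : L, x ≠ 0 ∧ (∀ a ∈ maximalIdeal L, a * x = 0) ∧
      ∀ I : Ideal L, I ≠ ⊤ → I ≤ Ideal.span {x} := by
  by_cases h𝔪 : maximalIdeal L = ⊥
  · refine ⟨1, one_ne_zero, fun a ha ↦ ?_, fun I _ ↦ ?_⟩
    · rw [mul_one]
      rwa [h𝔪] at ha
    · rw [Ideal.span_singleton_one]
      exact le_top
  · obtain ⟨x, hx, hx0⟩ := Submodule.exists_mem_ne_zero_of_ne_bot h𝔪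
    exact ⟨x, hx0, fun a ha ↦ hL.mul_eq_zero ha hx, fun I hI y hy ↦
      Ideal.mem_span_singleton.mpr (hL.dvd hx hx0 (le_maximalIdeal hI hy))⟩

end

theorem of_isAlmostInjectiveLeft_residueField {L : Type u} [CommRing L] [IsLocalRing L]
    (hfg : (maximalIdeal L).FG) (hk : IsAlmostInjectiveLeft.{u, u, u} L (ResidueField L)) :
    HasMinimalMaximalIdeal L := by
  by_cases h𝔪 : maximalIdeal L = ⊥
  · exact fun I hI ↦ (not_lt_bot (h𝔪 ▸ hI)).elim
  have : Module.Finite L (maximalIdeal L) := Module.Finite.iff_fg.mpr hfg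
  have : Nontrivial (maximalIdeal L) := Submodule.nontrivial_iff_ne_bot.mpr h𝔪
  obtain ⟨f, hf⟩ := exists_surjective_residueField (L := L) (maximalIdeal L)
  rcases isAlmostInjectiveLeft_iff_exists_isIdempotentElem.mp hk (maximalIdeal L) L
    (maximalIdeal L).subtype (Submodule.subtype_injective _) f with ⟨g, hg⟩ | ⟨p, hp, hp0, h, hh⟩
  · obtain ⟨x, hx⟩ := hf (1 : ResidueField L)
    have hgx : g x = (x : L) • g 1 := by rw [← map_smul, smul_eq_mul, mul_one]
    have hzero : (1 : ResidueField L) = 0 := by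
      rw [← hx, ← hg, LinearMap.comp_apply, Submodule.subtype_apply, hgx,
        smul_residueField_eq_zero x.2]
    exact absurd hzero one_ne_zero
  · rw [eq_id_of_isIdempotentElem_end hp hp0, LinearMap.id_comp] at hh
    refine of_injective (f := f) (.of_comp (f := h) ?_)
    rw [← LinearMap.coe_comp, hh]
    exact Submodule.subtype_injective _

end HasMinimalMaximalIdeal

section Localization

variable {R : Type u} [CommRing R]

theorem isSimpleModule_residueField (m : Ideal R) [m.IsMaximal] :
    IsSimpleModule R m.ResidueField :=
  (isSimpleModule_iff_isSimpleModule_of_algebraMap_surjective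
    m.algebraMap_residueField_surjective).mpr inferInstance

theorem AlmostVRingLeft.hasMinimalMaximalIdeal (hR : AlmostVRingLeft.{u, u, u} R) {m : Ideal R}
    [m.IsMaximal] (hm : m.FG) : HasMinimalMaximalIdeal (Localization.AtPrime m) := by
  refine .of_isAlmostInjectiveLeft_residueField ?_ ?_
  · rw [← Localization.AtPrime.map_eq_maximalIdeal]
    exact hm.map _
  · exact (hR m.ResidueField (isSimpleModule_residueField m)).of_isLocalization m.primeCompl _

theorem algebraMap_mul_eq_zero {m : Ideal R} [m.IsMaximal]
    (hm : HasMinimalMaximalIdeal (Localization.AtPrime m)) {a b : R} (ha : a ∈ m) (hb : b ∈ m) :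
    algebraMap R (Localization.AtPrime m) (a * b) = 0 := by
  have hmem {c : R} (hc : c ∈ m) : algebraMap R (Localization.AtPrime m) c ∈ maximalIdeal _ :=
    (IsLocalization.AtPrime.to_map_mem_maximal_iff _ m c).mpr hc
  rw [map_mul, hm.mul_eq_zero (hmem ha) (hmem hb)]

theorem jacobson_bot_sq_eq_bot
    (hR : ∀ (m : Ideal R) [m.IsMaximal], HasMinimalMaximalIdeal (Localization.AtPrime m)) :
    Ideal.jacobson (⊥ : Ideal R) ^ 2 = ⊥ := by
  rw [eq_bot_iff, pow_two, Ideal.mul_le]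
  refine fun a ha b hb ↦ MaximalSpectrum.toPiLocalization_injective R ?_
  rw [map_zero]
  funext m
  have hJ : Ideal.jacobson ⊥ ≤ m.asIdeal := sInf_le ⟨bot_le, m.isMaximal⟩
  have := m.isMaximal
  exact algebraMap_mul_eq_zero (hR m.asIdeal) (hJ ha) (hJ hb)

theorem isArtinianRing_of_hasMinimalMaximalIdeal (hfg : ∀ m : Ideal R, m.IsMaximal → m.FG)
    (hR : ∀ (m : Ideal R) [m.IsMaximal], HasMinimalMaximalIdeal (Localization.AtPrime m)) :
    IsArtinianRing R := by
  have hmax (p : Ideal R) (hp : p.IsPrime) : p.IsMaximal := by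
    obtain ⟨m, hm, hpm⟩ := p.exists_le_maximal hp.ne_top
    suffices m ≤ p from le_antisymm hpm this ▸ hm
    intro a ha
    obtain ⟨s, hs⟩ := (IsLocalization.map_eq_zero_iff m.primeCompl (Localization.AtPrime m)
      (a * a)).mp (algebraMap_mul_eq_zero (hR m) ha ha)
    have haa : a * a ∈ p := (hp.mem_or_mem (hs ▸ p.zero_mem)).resolve_left fun h ↦ s.2 (hpm h)
    exact or_self_iff.mp (hp.mem_or_mem haa)
  exact isArtinianRing_iff_isNoetherianRing_krullDimLE_zero.mpr
    ⟨.of_prime fun p hp ↦ hfg p (hmax p hp), Ring.krullDimLE_zero_iff.mpr hmax⟩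

theorem injective_self_of_hasMinimalMaximalIdeal [IsNoetherianRing R]
    (hR : ∀ (m : Ideal R) [m.IsMaximal], HasMinimalMaximalIdeal (Localization.AtPrime m)) :
    Module.Injective R R :=
  Module.injective_of_localization_maximal' (fun m _ ↦ Localization.AtPrime m)
    (fun m _ ↦ Localization.AtPrime m) (fun m _ ↦ Algebra.linearMap R (Localization.AtPrime m))
    fun m _ ↦ (hR m).injective_self

variable [IsArtinianRing R]

theorem isSerial_of_hasMinimalMaximalIdeal
    (hR : ∀ (m : Ideal R) [m.IsMaximal], HasMinimalMaximalIdeal (Localization.AtPrime m)) :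
    IsSerial R R := by
  refine .of_linearEquiv_pi (MaximalSpectrum.toPiLocalizationEquiv R).toLinearEquiv fun m ↦ ?_
  have := m.isMaximal
  exact (isUniserial_iff_of_algebraMap_surjective
    (IsArtinianRing.localization_surjective m.asIdeal.primeCompl _)).mpr (hR m.asIdeal).isUniserial

theorem maximalIdeal_localization_eq_map_jacobson (m : Ideal R) [m.IsMaximal] :
    maximalIdeal (Localization.AtPrime m) = (Ideal.jacobson ⊥).map (algebraMap R _) := by
  have : IsArtinianRing (Localization.AtPrime m) :=
    IsArtinianRing.localization_artinian m.primeCompl _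
  rw [← jacobson_eq_maximalIdeal ⊥ bot_ne_top, IsArtinianRing.jacobson_eq_radical,
    IsArtinianRing.jacobson_eq_radical, IsLocalization.map_radical m.primeCompl, Ideal.map_bot]

theorem hasMinimalMaximalIdeal_of_isSerial (hR : IsSerial R R)
    (hJ : Ideal.jacobson (⊥ : Ideal R) ^ 2 = ⊥) (m : Ideal R) [m.IsMaximal] :
    HasMinimalMaximalIdeal (Localization.AtPrime m) := by
  refine .of_isUniserial (hR.isUniserial_of_algebraMap_surjective
    (IsArtinianRing.localization_surjective m.primeCompl _)) ?_
  rw [maximalIdeal_localization_eq_map_jacobson, ← Ideal.map_pow, hJ, Ideal.map_bot]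

theorem exists_leftInverse_algebraMap_localization (m : Ideal R) [hm : m.IsMaximal] :
    ∃ s : Localization.AtPrime m →ₗ[R] R, ∀ x, algebraMap R (Localization.AtPrime m) (s x) = x := by
  classical
  let e := MaximalSpectrum.toPiLocalizationEquiv R
  refine ⟨e.symm.toLinearMap ∘ₗ
    LinearMap.single R (fun n : MaximalSpectrum R ↦ Localization.AtPrime n.asIdeal) ⟨m, hm⟩,
    fun x ↦ ?_⟩
  have h := congrFun (e.apply_symm_apply (Pi.single ⟨m, hm⟩ x)) ⟨m, hm⟩
  rwa [Pi.single_eq_same] at h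

theorem projective_localization (m : Ideal R) [m.IsMaximal] :
    Module.Projective R (Localization.AtPrime m) := by
  obtain ⟨s, hs⟩ := exists_leftInverse_algebraMap_localization m
  exact .of_split s (Algebra.linearMap R _) (LinearMap.ext hs)

theorem injective_localization [Module.Injective R R] (m : Ideal R) [m.IsMaximal] :
    Module.Injective R (Localization.AtPrime m) := by
  obtain ⟨s, hs⟩ := exists_leftInverse_algebraMap_localization m
  exact injective_of_leftInverse s (Algebra.linearMap R _) (LinearMap.ext hs)

theorem exists_quotient_equiv_forall_ne_top_le {m : Ideal R} [hm : m.IsMaximal]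
    (h : HasMinimalMaximalIdeal (Localization.AtPrime m)) :
    ∃ S : Submodule R (Localization.AtPrime m), Nonempty ((R ⧸ m) ≃ₗ[R] S) ∧
      ∀ N : Submodule R (Localization.AtPrime m), N ≠ ⊤ → N ≤ S := by
  have hsurj : Function.Surjective (algebraMap R (Localization.AtPrime m)) :=
    IsArtinianRing.localization_surjective m.primeCompl _
  obtain ⟨x, hx0, hkill, hle⟩ := h.exists_forall_ne_top_le_span
  let φ := LinearMap.toSpanSingleton R (Localization.AtPrime m) x
  have hker : m = LinearMap.ker φ := by
    refine hm.eq_of_le (fun htop ↦ hx0 ?_) fun a ha ↦ ?_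
    · rw [← one_smul R x]
      exact LinearMap.mem_ker.mp (htop ▸ Submodule.mem_top : (1 : R) ∈ LinearMap.ker φ)
    · rw [LinearMap.mem_ker, LinearMap.toSpanSingleton_apply, Algebra.smul_def]
      exact hkill _ ((IsLocalization.AtPrime.to_map_mem_maximal_iff _ m a).mpr ha)
  refine ⟨LinearMap.range φ, ⟨Submodule.quotEquivOfEq m _ hker ≪≫ₗ φ.quotKerEquivRange⟩,
    fun N hN y hy ↦ ?_⟩
  let e := Submodule.orderIsoOfAlgebraMapSurjective (M := Localization.AtPrime m) hsurj
  have hyx : y ∈ Ideal.span {x} := hle (e.symm N) (mt (map_eq_top_iff e.symm).mp hN) hy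
  obtain ⟨l, rfl⟩ := Ideal.mem_span_singleton'.mp hyx
  obtain ⟨a, rfl⟩ := hsurj l
  exact ⟨a, Algebra.smul_def a x⟩

theorem almostVRingLeft_of_hasMinimalMaximalIdeal
    (hR : ∀ (m : Ideal R) [m.IsMaximal], HasMinimalMaximalIdeal (Localization.AtPrime m)) :
    AlmostVRingLeft.{u, u, u} R := by
  intro S _ _ hS
  obtain ⟨m, hm, ⟨e⟩⟩ := isSimpleModule_iff_quot_maximal.mp hS
  have : Module.Injective R R := injective_self_of_hasMinimalMaximalIdeal hR
  have : Module.Injective R (Localization.AtPrime m) := injective_localization m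
  have : Module.Projective R (Localization.AtPrime m) := projective_localization m
  obtain ⟨T, ⟨e'⟩, hT⟩ := exists_quotient_equiv_forall_ne_top_le (hR m)
  exact (isAlmostInjectiveLeft_of_forall_ne_top_le hT).of_linearEquiv_s4 (e ≪≫ₗ e').symm

end Localization

/-- For a commutative ring `R` in which every maximal ideal is finitely
generated, `R` is an almost V-ring iff `R` is a quasi-Frobenius serial ring with
`J(R)² = 0`. -/
theorem almostVRing_iff_quasiFrobenius_serial (R : Type u) [CommRing R]
    (hN : ∀ I : Ideal R, I.IsMaximal → I.FG) :
    AlmostVRingLeft.{u, u, u} R ↔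
      (IsArtinianRing R ∧ Module.Injective R R ∧
        (∃ (n : ℕ) (c : Fin n → Submodule R R), DirectSum.IsInternal c ∧
          ∀ i, ∀ N P : Submodule R ↥(c i), N ≤ P ∨ P ≤ N) ∧
        (Ideal.jacobson (⊥ : Ideal R)) ^ 2 = ⊥) := by
  constructor
  · intro hV
    have hmin (m : Ideal R) [hm : m.IsMaximal] :
        HasMinimalMaximalIdeal (Localization.AtPrime m) := hV.hasMinimalMaximalIdeal (hN m hm)
    have : IsArtinianRing R := isArtinianRing_of_hasMinimalMaximalIdeal hN hmin
    exact ⟨this, injective_self_of_hasMinimalMaximalIdeal hmin,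
      isSerial_of_hasMinimalMaximalIdeal hmin, jacobson_bot_sq_eq_bot hmin⟩
  · rintro ⟨_, -, hserial, hJ⟩
    exact almostVRingLeft_of_hasMinimalMaximalIdeal
      (hasMinimalMaximalIdeal_of_isSerial hserial hJ)
end

section
/- Let R be a ring. Then every mininjective right R-module is injective if and only if R is right Noetherian and every min-flat left R-module is projective. -/
universe u v w v'

open MulOpposite

section RightDefs
variable (R : Type u) [Ring R]

/-- A right `R`-module (i.e. an `Rᵐᵒᵖ`-module) `M` is mininjective if every homomorphism
from a minimal right ideal `I` of `R` into `M` extends to a homomorphism `R → M`. -/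
def IsMininjective (M : Type v) [AddCommGroup M] [Module Rᵐᵒᵖ M] : Prop :=
  ∀ I : Submodule Rᵐᵒᵖ R, IsAtom I → ∀ f : ↥I →ₗ[Rᵐᵒᵖ] M,
    ∃ g : R →ₗ[Rᵐᵒᵖ] M, ∀ x : ↥I, g ↑x = f x

/-- A right `R`-module `M` is min-projective if every short exact sequence
`0 → N → X → M → 0` with `N` mininjective splits (equivalently `Ext¹(M, N) = 0`
for every mininjective `N`). -/
def IsMinProjective (M : Type v) [AddCommGroup M] [Module Rᵐᵒᵖ M] : Prop :=
  ∀ (X : Type (max u v)) [AddCommGroup X] [Module Rᵐᵒᵖ X] (p : X →ₗ[Rᵐᵒᵖ] M),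
    Function.Surjective p → IsMininjective R ↥(LinearMap.ker p) →
      ∃ s : M →ₗ[Rᵐᵒᵖ] X, p ∘ₗ s = LinearMap.id

/-- `R` is right strongly min-coherent if every minimal right ideal of `R` is min-projective. -/
def RightStronglyMinCoherent : Prop :=
  ∀ I : Submodule Rᵐᵒᵖ R, IsAtom I → IsMinProjective R ↥I

/-- `R` is a right quasi V-ring if every simple right `R`-module which is not isomorphic to
any right ideal of `R` is injective. -/
def RightQuasiVRing : Prop :=
  ∀ (S : Type v) [AddCommGroup S] [Module Rᵐᵒᵖ S], IsSimpleModule Rᵐᵒᵖ S →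
    (¬ ∃ I : Submodule Rᵐᵒᵖ R, Nonempty (S ≃ₗ[Rᵐᵒᵖ] ↥I)) → Module.Injective Rᵐᵒᵖ S

/-- `R` is a right GV-ring if every simple right `R`-module is injective or projective. -/
def RightGVRing : Prop :=
  ∀ (S : Type v) [AddCommGroup S] [Module Rᵐᵒᵖ S], IsSimpleModule Rᵐᵒᵖ S →
    Module.Injective Rᵐᵒᵖ S ∨ Module.Projective Rᵐᵒᵖ S

/-- `R` is right Kasch if every simple right `R`-module is isomorphic to a right ideal of `R`. -/
def RightKasch : Prop :=
  ∀ (S : Type v) [AddCommGroup S] [Module Rᵐᵒᵖ S], IsSimpleModule Rᵐᵒᵖ S →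
    ∃ I : Submodule Rᵐᵒᵖ R, Nonempty (S ≃ₗ[Rᵐᵒᵖ] ↥I)

/-- A right `R`-module `M` is almost injective if for every monomorphism `i : A → B` and
every `f : A → M`, either `f` extends to `B`, or there are a nonzero direct summand `D` of
`B` (with projection `π : B → D`) and `h : M → D` with `h ∘ f = π ∘ i`. -/
def IsAlmostInjective (M : Type v) [AddCommGroup M] [Module Rᵐᵒᵖ M] : Prop :=
  ∀ (A B : Type w) [AddCommGroup A] [AddCommGroup B] [Module Rᵐᵒᵖ A] [Module Rᵐᵒᵖ B]
    (i : A →ₗ[Rᵐᵒᵖ] B), Function.Injective i → ∀ f : A →ₗ[Rᵐᵒᵖ] M,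
    (∃ g : B →ₗ[Rᵐᵒᵖ] M, g ∘ₗ i = f) ∨
    (∃ D : Submodule Rᵐᵒᵖ B, D ≠ ⊥ ∧ ∃ π : B →ₗ[Rᵐᵒᵖ] ↥D,
      π ∘ₗ D.subtype = LinearMap.id ∧ ∃ h : M →ₗ[Rᵐᵒᵖ] ↥D, h ∘ₗ f = π ∘ₗ i)

/-- `R` is a right almost V-ring if every simple right `R`-module is almost injective. -/
def RightAlmostVRing : Prop :=
  ∀ (S : Type v) [AddCommGroup S] [Module Rᵐᵒᵖ S], IsSimpleModule Rᵐᵒᵖ S →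
    IsAlmostInjective.{u, v, w} R S

/-- `R` is right serial if `R`, as a right `R`-module, is an internal direct sum of finitely
many uniserial submodules. -/
def RightSerial : Prop :=
  ∃ (n : ℕ) (c : Fin n → Submodule Rᵐᵒᵖ R), DirectSum.IsInternal c ∧
    ∀ i, ∀ N P : Submodule Rᵐᵒᵖ ↥(c i), N ≤ P ∨ P ≤ N

/-- `R` is left serial if `R`, as a left `R`-module, is an internal direct sum of finitely
many uniserial submodules. -/
def LeftSerial : Prop :=
  ∃ (n : ℕ) (c : Fin n → Submodule R R), DirectSum.IsInternal c ∧
    ∀ i, ∀ N P : Submodule R ↥(c i), N ≤ P ∨ P ≤ N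

/-- The square of the Jacobson radical of `R` is zero. -/
def JacobsonSquareZero : Prop :=
  ∀ x ∈ (⊥ : TwoSidedIdeal R).jacobson, ∀ y ∈ (⊥ : TwoSidedIdeal R).jacobson, x * y = 0

end RightDefs

section MinFlat
variable (R : Type u) [Ring R] (M : Type v) [AddCommGroup M] [Module R M]

/-- The balancing relations inside `I ⊗_ℤ M` defining the tensor product `I ⊗_R M`
of the right ideal `I` with the left module `M` over the (possibly noncommutative)
ring `R`. -/
def minflatBalance (I : Submodule Rᵐᵒᵖ R) : Submodule ℤ (TensorProduct ℤ ↥I M) :=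
  Submodule.span ℤ {t | ∃ (x : ↥I) (r : R) (m : M),
    t = (MulOpposite.op r • x) ⊗ₜ[ℤ] m - x ⊗ₜ[ℤ] (r • m)}

/-- The additive map `I ⊗_ℤ M → M` sending `x ⊗ m` to `x • m`. -/
noncomputable def minflatAux (I : Submodule Rᵐᵒᵖ R) : TensorProduct ℤ ↥I M →+ M :=
  TensorProduct.liftAddHom
    { toFun := fun x => DistribMulAction.toAddMonoidHom M (x : R)
      map_zero' := by ext m; simp
      map_add' := fun x y => by ext m; exact add_smul (x : R) (y : R) m }
    (fun n x m => by
      show ((n • x : ↥I) : R) • m = (x : R) • (n • m)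
      have hcoe : ((n • x : ↥I) : R) = n • (x : R) := rfl
      rw [hcoe, zsmul_eq_mul, mul_smul, Int.cast_smul_eq_zsmul, smul_comm])

lemma minflatBalance_le_ker (I : Submodule Rᵐᵒᵖ R) :
    minflatBalance R M I ≤ LinearMap.ker (minflatAux R M I).toIntLinearMap := by
  rw [minflatBalance, Submodule.span_le]
  rintro t ⟨x, r, m, rfl⟩
  simp only [SetLike.mem_coe, LinearMap.mem_ker, AddMonoidHom.coe_toIntLinearMap, map_sub]
  have h1 : minflatAux R M I ((MulOpposite.op r • x) ⊗ₜ[ℤ] m)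
      = ((MulOpposite.op r • x : ↥I) : R) • m := by
    simp [minflatAux, TensorProduct.liftAddHom_tmul]
  have h2 : minflatAux R M I (x ⊗ₜ[ℤ] (r • m)) = (x : R) • (r • m) := by
    simp [minflatAux, TensorProduct.liftAddHom_tmul]
  rw [h1, h2, Submodule.coe_smul, MulOpposite.smul_eq_mul_unop, MulOpposite.unop_op, mul_smul,
    sub_self]

/-- A left `R`-module `M` is min-flat if for every minimal right ideal `I` of `R`
the canonical map `I ⊗_R M → M` is injective. -/
def IsMinFlat : Prop :=
  ∀ I : Submodule Rᵐᵒᵖ R, IsAtom I →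
    Function.Injective
      (Submodule.liftQ (minflatBalance R M I) (minflatAux R M I).toIntLinearMap
        (minflatBalance_le_ker R M I))

end MinFlat

/-!
Characters `M⁺ = Hom_ℤ(M, ℚ/ℤ)` exchange left and right modules. If a left module `M` is min-flat
then `M⁺` is mininjective; over a right Noetherian ring, if a right module `M` is mininjective then
`M⁺` is min-flat.

If `R` is right Noetherian and `M⁺` is projective, the dual basis of `M⁺` shows that every finite
compatible system of equations over `M` is solvable, so `M` is injective.

Conversely, suppose that mininjective right modules are injective. Direct sums of injectives are
mininjective, so `R` is right Noetherian by the Bass–Papp argument; every nonzero right module has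
a simple submodule, so `R` is even right Artinian. Hence `R` has a nilpotent two-sided ideal `J`
with `R/J` semisimple. Let `p : F → M` be a surjection from a projective module onto a min-flat one,
with kernel `K`. Injectivity of `M⁺` gives `K ∩ JF = JK`, so `K/JK` is a summand of `F/JF`; lifting
the projection along `F` gives `F → K` that is the identity on `K` modulo `J`, and nilpotence of `J`
corrects it to a retraction, which splits `p`.
-/

section Characters

variable {A : Type*} [AddCommGroup A] {B : Type*} [AddCommGroup B]

lemma exists_character_comp_eq (f : A →+ B) (χ : CharacterModule A)
    (hχ : ∀ a, f a = 0 → χ a = 0) : ∃ ψ : CharacterModule B, ∀ a, ψ (f a) = χ a := by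
  obtain ⟨ψ, hψ⟩ := CharacterModule.dual_surjective_of_injective (R := ℤ)
    (QuotientAddGroup.kerLift f).toIntLinearMap (QuotientAddGroup.kerLift_injective f)
    (QuotientAddGroup.lift f.ker χ hχ)
  exact ⟨ψ, fun a => DFunLike.congr_fun hψ (QuotientAddGroup.mk a)⟩

lemma exists_character_vanishing_on (C : AddSubgroup A) {a : A} (ha : a ∉ C) :
    ∃ χ : CharacterModule A, (∀ c ∈ C, χ c = 0) ∧ χ a ≠ 0 := by
  have ha' : QuotientAddGroup.mk' C a ≠ 0 := fun h => ha ((QuotientAddGroup.eq_zero_iff a).1 h)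
  obtain ⟨χ, hχ⟩ := CharacterModule.exists_character_apply_ne_zero_of_ne_zero ha'
  exact ⟨AddMonoidHom.comp χ (QuotientAddGroup.mk' C), fun c hc =>
    (congrArg χ ((QuotientAddGroup.eq_zero_iff c).2 hc)).trans (map_zero χ), hχ⟩

variable {ι : Type*} [Fintype ι]

lemma exists_forall_character_pi_eq_sum (Ψ : CharacterModule (ι → B)) :
    ∃ ψ : ι → CharacterModule B, ∀ v, Ψ v = ∑ i, ψ i (v i) := by
  classical
  refine ⟨fun i => AddMonoidHom.comp Ψ (AddMonoidHom.single (fun _ => B) i), fun v => ?_⟩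
  conv_lhs => rw [← Finset.univ_sum_single v, map_sum]
  rfl

lemma exists_character_eq_sum_comp (f : ι → A →+ B) (χ : CharacterModule A)
    (hχ : ∀ a, (∀ i, f i a = 0) → χ a = 0) :
    ∃ ψ : ι → CharacterModule B, ∀ a, χ a = ∑ i, ψ i (f i a) := by
  obtain ⟨Ψ, hΨ⟩ := exists_character_comp_eq (AddMonoidHom.pi f) χ
    fun a ha => hχ a fun i => congrFun ha i
  obtain ⟨ψ, hψ⟩ := exists_forall_character_pi_eq_sum Ψ
  exact ⟨ψ, fun a => (hΨ a).symm.trans (hψ _)⟩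

lemma exists_eq_of_forall_sum_character_eq_zero (f : ι → A →+ B) (v : ι → B)
    (hv : ∀ ψ : ι → CharacterModule B,
      (∀ a, ∑ i, ψ i (f i a) = 0) → ∑ i, ψ i (v i) = 0) :
    ∃ a, ∀ i, f i a = v i := by
  by_contra hne
  have hv' : v ∉ (AddMonoidHom.pi f).range := fun ⟨a, ha⟩ => hne ⟨a, fun i => congrFun ha i⟩
  obtain ⟨Ψ, hΨ, hΨv⟩ := exists_character_vanishing_on _ hv'
  obtain ⟨ψ, hψ⟩ := exists_forall_character_pi_eq_sum Ψ
  rw [hψ] at hΨv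
  exact hΨv (hv ψ fun a => (hψ _).symm.trans (hΨ _ ⟨a, rfl⟩))

end Characters

section Criteria

variable {R : Type*} [Ring R]

lemma exists_span_singleton_eq_of_isAtom {S N : Type*} [Ring S] [AddCommGroup N] [Module S N]
    {I : Submodule S N} (hI : IsAtom I) : ∃ a, Submodule.span S {a} = I := by
  obtain ⟨a, haI, ha⟩ := Submodule.exists_mem_ne_zero_of_ne_bot hI.1
  have hne : Submodule.span S {a} ≠ ⊥ := fun h => ha (Submodule.span_singleton_eq_bot.1 h)
  exact ⟨a, (hI.le_iff_eq hne).1 ((Submodule.span_singleton_le_iff_mem a I).2 haI)⟩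

lemma isMininjective_iff {M : Type*} [AddCommGroup M] [Module Rᵐᵒᵖ M] :
    IsMininjective R M ↔ ∀ a : R, IsAtom (Submodule.span Rᵐᵒᵖ {a}) →
      ∀ m : M, (∀ r : R, a * r = 0 → op r • m = 0) → ∃ y : M, op a • y = m := by
  constructor
  · intro hM a ha m hm
    have hm_op : ∀ c : Rᵐᵒᵖ, c • a = 0 → c • m = 0 := fun c hc => hm (unop c) hc
    let f := LinearPMap.mkSpanSingleton' (σ := RingHom.id Rᵐᵒᵖ) a m hm_op
    obtain ⟨g, hg⟩ := hM _ ha f.toFun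
    refine ⟨g 1, ?_⟩
    calc op a • g 1 = g a := by rw [← map_smul, op_smul_eq_mul, one_mul]
      _ = f.toFun ⟨a, Submodule.mem_span_singleton_self a⟩ := hg ⟨a, _⟩
      _ = m := LinearPMap.mkSpanSingleton'_apply_self a m _ _
  · intro h I hI f
    obtain ⟨a, rfl⟩ := exists_span_singleton_eq_of_isAtom hI
    let a' : Submodule.span Rᵐᵒᵖ {a} := ⟨a, Submodule.mem_span_singleton_self a⟩
    obtain ⟨y, hy⟩ := h a hI (f a') fun r hr => by
      have hra : op r • a' = 0 := Subtype.ext hr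
      rw [← map_smul, hra, map_zero]
    refine ⟨LinearMap.toSpanSingleton Rᵐᵒᵖ M y ∘ₗ (opLinearEquiv Rᵐᵒᵖ).toLinearMap, ?_⟩
    rintro ⟨x, hx⟩
    obtain ⟨c, rfl⟩ := Submodule.mem_span_singleton.1 hx
    calc (c * op a) • y = c • f a' := by rw [mul_smul, hy]
      _ = f ⟨c • a, hx⟩ := (map_smul f c a').symm

variable {M : Type*} [AddCommGroup M] [Module R M]

lemma minflatAux_tmul (I : Submodule Rᵐᵒᵖ R) (x : I) (m : M) :
    minflatAux R M I (x ⊗ₜ[ℤ] m) = (x : R) • m := by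
  simp [minflatAux]

lemma mkQ_minflatBalance_op_smul_tmul (I : Submodule Rᵐᵒᵖ R) (r : R) (x : I) (m : M) :
    (minflatBalance R M I).mkQ ((op r • x) ⊗ₜ m) = (minflatBalance R M I).mkQ (x ⊗ₜ (r • m)) :=
  (Submodule.Quotient.eq _).2 (Submodule.subset_span ⟨x, r, m, rfl⟩)

lemma exists_mkQ_minflatBalance_eq {a : R} (t : TensorProduct ℤ (Submodule.span Rᵐᵒᵖ {a}) M) :
    ∃ m : M, (minflatBalance R M _).mkQ t =
      (minflatBalance R M _).mkQ (⟨a, Submodule.mem_span_singleton_self a⟩ ⊗ₜ m) := by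
  induction t using TensorProduct.induction_on with
  | zero => exact ⟨0, by rw [TensorProduct.tmul_zero]⟩
  | tmul x m =>
    obtain ⟨x, hx⟩ := x
    obtain ⟨c, rfl⟩ := Submodule.mem_span_singleton.1 hx
    exact ⟨unop c • m, mkQ_minflatBalance_op_smul_tmul _ (unop c) ⟨a, _⟩ m⟩
  | add s t hs ht =>
    obtain ⟨m, hm⟩ := hs
    obtain ⟨n, hn⟩ := ht
    exact ⟨m + n, by rw [map_add, hm, hn, ← map_add, TensorProduct.tmul_add]⟩

lemma isMinFlat_of_forall_exists_sum
    (h : ∀ a : R, IsAtom (Submodule.span Rᵐᵒᵖ {a}) → ∀ m : M, a • m = 0 →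
      ∃ (n : ℕ) (b : Fin n → R) (x : Fin n → M), (∀ i, a * b i = 0) ∧ ∑ i, b i • x i = m) :
    IsMinFlat R M := by
  intro I hI
  obtain ⟨a, rfl⟩ := exists_span_singleton_eq_of_isAtom hI
  refine (injective_iff_map_eq_zero _).2 fun t ht => ?_
  obtain ⟨t, rfl⟩ := Submodule.mkQ_surjective _ t
  obtain ⟨m, hm⟩ := exists_mkQ_minflatBalance_eq t
  have ham : a • m = 0 := by
    rw [hm] at ht
    exact (minflatAux_tmul _ _ m).symm.trans ht
  obtain ⟨n, b, x, hab, rfl⟩ := h a hI m ham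
  rw [hm, TensorProduct.tmul_sum, map_sum]
  refine Finset.sum_eq_zero fun i _ => ?_
  have hba : op (b i) • (⟨a, Submodule.mem_span_singleton_self a⟩ : Submodule.span Rᵐᵒᵖ {a}) = 0 :=
    Subtype.ext (hab i)
  rw [← mkQ_minflatBalance_op_smul_tmul, hba, TensorProduct.zero_tmul, map_zero]

end Criteria

section ChainConditions

variable {S : Type u} [Ring S]

lemma exists_dfinsupp_linearMap {ι : Type*} {M : Type*} [AddCommGroup M] [Module S M]
    {E : ι → Type*} [∀ i, AddCommGroup (E i)] [∀ i, Module S (E i)] (f : ∀ i, M →ₗ[S] E i)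
    (hf : ∀ x, {i | f i x ≠ 0}.Finite) :
    ∃ F : M →ₗ[S] Π₀ i, E i, ∀ x i, F x i = f i x := by
  classical
  let F (x : M) : Π₀ i, E i := DFinsupp.mk (hf x).toFinset fun i => f i x
  have hF : ∀ x i, F x i = f i x := by
    intro x i
    by_cases hi : f i x = 0 <;> simp [F, hi]
  exact ⟨{ toFun := F
           map_add' := fun x y => DFinsupp.ext fun i => by
            rw [DFinsupp.add_apply, hF, hF, hF, map_add]
           map_smul' := fun c x => DFinsupp.ext fun i => by
            rw [RingHom.id_apply, DFinsupp.smul_apply, hF, hF, map_smul] }, hF⟩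

lemma exists_injective_linearMap_to_injective (M : Type u) [AddCommGroup M] [Module S M] :
    ∃ (E : Type u) (_ : AddCommGroup E) (_ : Module S E) (e : M →ₗ[S] E),
      Module.Injective S E ∧ Function.Injective e := by
  let X : ModuleCat.{u} S := ModuleCat.of S M
  let E : ModuleCat.{u} S := CategoryTheory.Injective.under X
  have : CategoryTheory.Injective E := CategoryTheory.Injective.injective_under X
  exact ⟨E, inferInstance, inferInstance, (CategoryTheory.Injective.ι X).hom,
    Module.injective_module_of_injective_object S E,
    (ModuleCat.mono_iff_injective _).1 inferInstance⟩

-- For a chain `I n` with union `U`, the maps `U → S ⧸ I n → E n` are jointly finitely supported;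
-- an extension to `S` is determined by the image of `1`, so almost all of them vanish.
theorem isNoetherianRing_of_injective_dfinsupp
    (H : ∀ (E : ℕ → Type u) [∀ n, AddCommGroup (E n)] [∀ n, Module S (E n)],
      (∀ n, Module.Injective S (E n)) → Module.Injective S (Π₀ n, E n)) :
    IsNoetherianRing S := by
  refine monotone_stabilizes_iff_noetherian.1 fun I => ?_
  choose E _ _ e hE he using fun n =>
    exists_injective_linearMap_to_injective (S := S) (S ⧸ I n)
  have hker : ∀ n x, e n ((I n).mkQ x) = 0 ↔ x ∈ I n := fun n x => by
    rw [map_eq_zero_iff _ (he n), Submodule.mkQ_apply, Submodule.Quotient.mk_eq_zero]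
  let U : Submodule S S := ⨆ n, I n
  obtain ⟨F, hF⟩ := exists_dfinsupp_linearMap (fun n => e n ∘ₗ (I n).mkQ ∘ₗ U.subtype) fun x => by
    obtain ⟨k, hk⟩ := (Submodule.mem_iSup_of_directed _ I.monotone.directed_le).1 x.2
    refine (Set.finite_lt_nat k).subset fun n hn => ?_
    by_contra hkn
    exact hn ((hker n x).2 (I.monotone (not_lt.1 hkn) hk))
  obtain ⟨g, hg⟩ := (H E hE).out U.subtype U.subtype_injective F
  classical
  obtain ⟨n, hn⟩ := Infinite.exists_notMem_finset (g 1).support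
  refine ⟨n, fun m hnm => (I.monotone hnm).antisymm fun x hx => (hker n x).1 ?_⟩
  have hxU : x ∈ U := Submodule.mem_iSup_of_mem m hx
  calc e n ((I n).mkQ x) = F ⟨x, hxU⟩ n := (hF ⟨x, hxU⟩ n).symm
    _ = g (x • 1) n := by rw [← hg, Submodule.subtype_apply, smul_eq_mul, mul_one]
    _ = 0 := by rw [map_smul, DFinsupp.smul_apply, DFinsupp.notMem_support_iff.1 hn, smul_zero]

theorem isArtinian_of_forall_quotient_exists_isAtom {N : Type*} [AddCommGroup N] [Module S N]
    [IsNoetherian S N]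
    (h : ∀ X : Submodule S N, X ≠ ⊤ → ∃ A : Submodule S (N ⧸ X), IsAtom A) :
    IsArtinian S N := by
  obtain ⟨X, hX : IsArtinian S X, hmax⟩ := set_has_maximal_iff_noetherian.2 ‹_›
    {X : Submodule S N | IsArtinian S X} ⟨⊥, inferInstanceAs (IsArtinian S (⊥ : Submodule S N))⟩
  suffices hXtop : X = ⊤ from Submodule.topEquiv.isArtinian_iff.1 (hXtop ▸ hX)
  by_contra hXtop
  obtain ⟨A, hA⟩ := h X hXtop
  have : IsSimpleModule S A := isSimpleModule_iff_isAtom.2 hA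
  let Y : Submodule S N := A.comap X.mkQ
  have hlt : X < Y := by
    have hcomap := Submodule.comap_strictMono_of_surjective X.mkQ_surjective hA.bot_lt
    rwa [Submodule.comap_bot, Submodule.ker_mkQ] at hcomap
  refine hmax Y (isArtinian_of_range_eq_ker (Submodule.inclusion hlt.le)
    (X.mkQ.restrict fun y (hy : y ∈ Y) => hy) ?_) hlt
  rw [Submodule.range_inclusion, LinearMap.ker_restrict, Submodule.ker_mkQ]

end ChainConditions

section Mininjective

variable {R : Type u} [Ring R]

lemma isMininjective_of_injective {E : Type u} [AddCommGroup E] [Module Rᵐᵒᵖ E]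
    (hE : Module.Injective Rᵐᵒᵖ E) : IsMininjective R E :=
  fun I _ f => hE.out I.subtype I.subtype_injective f

lemma isMininjective_dfinsupp {ι : Type*} {E : ι → Type*} [∀ i, AddCommGroup (E i)]
    [∀ i, Module Rᵐᵒᵖ (E i)] (hE : ∀ i, IsMininjective R (E i)) :
    IsMininjective R (Π₀ i, E i) := by
  classical
  refine isMininjective_iff.2 fun a ha m hm => ?_
  choose y hy using fun i => isMininjective_iff.1 (hE i) a ha (m i) fun r hr =>
    DFunLike.congr_fun (hm r hr) i
  refine ⟨DFinsupp.mk m.support fun i => y i, DFinsupp.ext fun i => ?_⟩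
  by_cases hi : m i = 0 <;> simp [hi, hy]

lemma isMininjective_of_forall_not_isAtom {M : Type*} [AddCommGroup M] [Module Rᵐᵒᵖ M]
    (hM : ∀ A : Submodule Rᵐᵒᵖ M, ¬ IsAtom A) : IsMininjective R M := by
  intro I hI f
  have : IsSimpleModule Rᵐᵒᵖ I := isSimpleModule_iff_isAtom.2 hI
  suffices hf : f = 0 from ⟨0, fun x => by rw [hf, LinearMap.zero_apply, LinearMap.zero_apply]⟩
  by_contra hf
  have e := LinearEquiv.ofInjective f (LinearMap.injective_of_ne_zero hf)
  exact hM (LinearMap.range f) (isSimpleModule_iff_isAtom.1 (IsSimpleModule.congr e.symm))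

theorem isNoetherianRing_op_of_isMininjective_imp_injective
    (H : ∀ (M : Type u) [AddCommGroup M] [Module Rᵐᵒᵖ M],
      IsMininjective R M → Module.Injective Rᵐᵒᵖ M) :
    IsNoetherianRing Rᵐᵒᵖ :=
  isNoetherianRing_of_injective_dfinsupp fun _ _ _ hE =>
    H _ (isMininjective_dfinsupp fun n => isMininjective_of_injective (hE n))

-- If `Q` had no simple submodule, all its submodules would be mininjective, hence direct
-- summands, and `Q` would be semisimple.
lemma exists_isAtom_of_isMininjective_imp_injective
    (H : ∀ (M : Type u) [AddCommGroup M] [Module Rᵐᵒᵖ M],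
      IsMininjective R M → Module.Injective Rᵐᵒᵖ M)
    (Q : Type u) [AddCommGroup Q] [Module Rᵐᵒᵖ Q] [Nontrivial Q] :
    ∃ A : Submodule Rᵐᵒᵖ Q, IsAtom A := by
  by_contra! hQ
  have hcompl : ∀ N : Submodule Rᵐᵒᵖ Q, ∃ N', IsCompl N N' := by
    intro N
    have hN : Module.Injective Rᵐᵒᵖ N := H N <| isMininjective_of_forall_not_isAtom fun A hA =>
      hQ (A.map N.subtype) ((N.mapIic.isAtom_iff A).2 hA).of_isAtom_coe_Iic
    obtain ⟨g, hg⟩ := hN.out N.subtype N.subtype_injective .id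
    exact ⟨LinearMap.ker g, LinearMap.isCompl_of_proj hg⟩
  have : IsSemisimpleModule Rᵐᵒᵖ Q := (isSemisimpleModule_iff _ _).2 ⟨hcompl⟩
  obtain ⟨A, hA, -⟩ := (eq_bot_or_exists_atom_le (⊤ : Submodule Rᵐᵒᵖ Q)).resolve_left top_ne_bot
  exact hQ A hA

theorem isArtinianRing_op_of_isMininjective_imp_injective
    (H : ∀ (M : Type u) [AddCommGroup M] [Module Rᵐᵒᵖ M],
      IsMininjective R M → Module.Injective Rᵐᵒᵖ M) :
    IsArtinianRing Rᵐᵒᵖ := by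
  have : IsNoetherianRing Rᵐᵒᵖ := isNoetherianRing_op_of_isMininjective_imp_injective H
  refine isArtinian_of_forall_quotient_exists_isAtom fun X hX => ?_
  have : Nontrivial (Rᵐᵒᵖ ⧸ X) := Submodule.Quotient.nontrivial_iff.2 hX
  exact exists_isAtom_of_isMininjective_imp_injective H _

end Mininjective

section NilpotentIdeals

variable {R : Type*} [Ring R] (J : Ideal R) {F K : Type*} [AddCommGroup F] [Module R F]
  [AddCommGroup K] [Module R K]

lemma isSemisimpleModule_quotient_smul_top [J.IsTwoSided] [IsSemisimpleRing (R ⧸ J)] :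
    IsSemisimpleModule R (F ⧸ (J • ⊤ : Submodule R F)) := by
  have htors : Module.IsTorsionBySet R (F ⧸ (J • ⊤ : Submodule R F)) J := by
    rw [Module.isTorsionBySet_quotient_iff]
    exact fun m j hj => Submodule.smul_mem_smul hj trivial
  let _ := htors.module
  exact (htors.semilinearMap.isSemisimpleModule_iff_of_bijective Function.bijective_id).2
    inferInstance

lemma exists_sub_apply_mem_smul_top [J.IsTwoSided] [IsSemisimpleRing (R ⧸ J)]
    [Module.Projective R F] {K : Submodule R F} (hK : K ⊓ J • ⊤ ≤ J • K) :
    ∃ g : F →ₗ[R] K, ∀ k : K, k - g k ∈ J • (⊤ : Submodule R K) := by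
  have := isSemisimpleModule_quotient_smul_top J (F := F)
  have hmap : (J • ⊤ : Submodule R K).map K.subtype = J • K := by
    rw [Submodule.map_smul'', Submodule.map_top, Submodule.range_subtype]
  let e : K ⧸ (J • ⊤ : Submodule R K) →ₗ[R] F ⧸ (J • ⊤ : Submodule R F) :=
    Submodule.mapQ _ _ K.subtype
      (Submodule.map_le_iff_le_comap.1 (hmap.trans_le (Submodule.smul_mono le_rfl le_top)))
  have he : Function.Injective e := by
    refine (injective_iff_map_eq_zero e).2 fun k hk => ?_
    obtain ⟨k, rfl⟩ := Submodule.mkQ_surjective _ k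
    have hkJ : (k : F) ∈ J • K := hK ⟨k.2, (Submodule.Quotient.mk_eq_zero _).1 hk⟩
    rw [← hmap] at hkJ
    exact (Submodule.Quotient.mk_eq_zero _).2 ((K.injective_subtype.mem_set_image).1 hkJ)
  obtain ⟨r, hr⟩ := IsSemisimpleModule.extension_property e he .id
  obtain ⟨g, hg⟩ := Module.projective_lifting_property (Submodule.mkQ (J • ⊤ : Submodule R K))
    (r ∘ₗ Submodule.mkQ _) (Submodule.mkQ_surjective _)
  refine ⟨g, fun k => (Submodule.Quotient.eq _).1 ?_⟩
  calc Submodule.Quotient.mk k = r (e (Submodule.Quotient.mk k)) :=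
        (LinearMap.congr_fun hr (Submodule.Quotient.mk k)).symm
    _ = Submodule.Quotient.mk (g k) := (LinearMap.congr_fun hg (k : F)).symm

variable {J}

lemma isNilpotent_of_forall_apply_mem_smul_top (hJ : IsNilpotent J) {ν : Module.End R K}
    (hν : ∀ k, ν k ∈ (J • ⊤ : Submodule R K)) : IsNilpotent ν := by
  obtain ⟨n, hn⟩ := hJ
  have hmap : (⊤ : Submodule R K).map ν ≤ J • ⊤ := Submodule.map_le_iff_le_comap.2 fun k _ => hν k
  have hpow : ∀ i, LinearMap.range (ν ^ i) ≤ J ^ i • (⊤ : Submodule R K) := by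
    intro i
    induction i with
    | zero => rw [Submodule.pow_zero, Ideal.one_eq_top, Submodule.top_smul]; exact le_top
    | succ i ih =>
      rintro _ ⟨k, rfl⟩
      have hk : ν ((ν ^ i) k) ∈ (J ^ i • (⊤ : Submodule R K)).map ν :=
        Submodule.mem_map_of_mem (ih ⟨k, rfl⟩)
      rw [pow_succ', Module.End.mul_apply, Submodule.pow_succ, Submodule.mul_smul]
      rw [Submodule.map_smul''] at hk
      exact Submodule.smul_mono le_rfl hmap hk
  refine ⟨n, LinearMap.ext fun k => ?_⟩
  simpa [hn] using hpow n ⟨k, rfl⟩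

lemma exists_retraction_of_inf_smul_top_le (hJ : IsNilpotent J) [J.IsTwoSided]
    [IsSemisimpleRing (R ⧸ J)] [Module.Projective R F] {K : Submodule R F}
    (hK : K ⊓ J • ⊤ ≤ J • K) : ∃ l : F →ₗ[R] K, l ∘ₗ K.subtype = .id := by
  obtain ⟨g, hg⟩ := exists_sub_apply_mem_smul_top J hK
  have hnil : IsNilpotent (1 - g ∘ₗ K.subtype : Module.End R K) :=
    isNilpotent_of_forall_apply_mem_smul_top hJ hg
  obtain ⟨u, hu⟩ := hnil.isUnit_one_sub
  refine ⟨(↑u⁻¹ : Module.End R K) ∘ₗ g, ?_⟩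
  rw [LinearMap.comp_assoc, ← sub_sub_cancel 1 (g ∘ₗ K.subtype), ← hu]
  exact u.inv_mul

end NilpotentIdeals

section SemiprimaryOpposite

variable {R : Type*} [Ring R]

lemma op_mem_pow_of_forall_op_mem {J : Ideal R} {L : Ideal Rᵐᵒᵖ} [L.IsTwoSided]
    (hJL : ∀ x ∈ J, op x ∈ L) (n : ℕ) : ∀ x ∈ J ^ n, op x ∈ L ^ n := by
  induction n with
  | zero =>
    intro x _
    rw [Submodule.pow_zero, Ideal.one_eq_top]
    trivial
  | succ n ih =>
    intro x hx
    rw [Submodule.pow_succ] at hx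
    rw [Ideal.IsTwoSided.pow_succ]
    exact Submodule.mul_induction_on hx (fun a ha b hb => Ideal.mul_mem_mul (hJL b hb) (ih a ha))
      fun a b ha hb => add_mem ha hb

lemma isNilpotent_of_forall_op_mem {J : Ideal R} {L : Ideal Rᵐᵒᵖ} [L.IsTwoSided]
    (hJL : ∀ x ∈ J, op x ∈ L) (hL : IsNilpotent L) : IsNilpotent J := by
  obtain ⟨n, hn⟩ := hL
  refine ⟨n, eq_bot_iff.2 fun x hx => op_injective ?_⟩
  have hx' := op_mem_pow_of_forall_op_mem hJL n x hx
  rwa [hn] at hx'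

lemma exists_isNilpotent_isSemisimpleRing_quotient [IsSemiprimaryRing Rᵐᵒᵖ] :
    ∃ (J : Ideal R) (_ : J.IsTwoSided), IsNilpotent J ∧ IsSemisimpleRing (R ⧸ J) := by
  obtain ⟨hss, hnil⟩ := (isSemiprimaryRing_iff Rᵐᵒᵖ).1 inferInstance
  let φ : R →+* (Rᵐᵒᵖ ⧸ Ring.jacobson Rᵐᵒᵖ)ᵐᵒᵖ :=
    (RingHom.op (Ideal.Quotient.mk (Ring.jacobson Rᵐᵒᵖ))).comp (RingEquiv.opOp R).toRingHom
  have hφ : Function.Surjective φ :=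
    (op_surjective.comp Ideal.Quotient.mk_surjective).comp op_surjective
  refine ⟨RingHom.ker φ, inferInstance, isNilpotent_of_forall_op_mem (fun x hx => ?_) hnil,
    (RingHom.quotientKerEquivOfSurjective hφ).symm.isSemisimpleRing⟩
  exact Ideal.Quotient.eq_zero_iff_mem.1 (op_injective hx)

end SemiprimaryOpposite

section CharacterModules

variable {R : Type*} [Ring R]

/-- The right module structure `(χ · r) m = χ (r m)` on the characters of a left module. -/
noncomputable local instance characterModuleRight {M : Type*} [AddCommGroup M] [Module R M] :
    Module Rᵐᵒᵖ (CharacterModule M) :=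
  inferInstanceAs (Module Rᵈᵐᵃ (M →+ AddCircle (1 : ℚ)))

/-- The left module structure `(r · χ) m = χ (m r)` on the characters of a right module. -/
noncomputable local instance characterModuleLeft {M : Type*} [AddCommGroup M] [Module Rᵐᵒᵖ M] :
    Module R (CharacterModule M) :=
  Module.compHom (CharacterModule M) (RingEquiv.opOp R).toRingHom

section

variable {M : Type*} [AddCommGroup M] [Module R M] {N : Type*} [AddCommGroup N] [Module R N]

lemma character_op_smul_apply (c : Rᵐᵒᵖ) (χ : CharacterModule M) (m : M) :
    (c • χ) m = χ (unop c • m) := rfl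

/-- Precomposition with a homomorphism of left modules, as a homomorphism of the right modules of
characters. -/
noncomputable def characterDual (f : M →ₗ[R] N) : CharacterModule N →ₗ[Rᵐᵒᵖ] CharacterModule M where
  toFun χ := AddMonoidHom.comp χ f.toAddMonoidHom
  map_add' _ _ := rfl
  map_smul' c χ := DFunLike.ext _ _ fun m => congrArg χ (f.map_smul (unop c) m).symm

lemma characterDual_injective {f : M →ₗ[R] N} (hf : Function.Surjective f) :
    Function.Injective (characterDual f) := fun _ _ h =>
  DFunLike.ext _ _ <| hf.forall.2 fun m => DFunLike.congr_fun h m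

end

lemma isMinFlat_characterModule_of_isMininjective [IsNoetherianRing Rᵐᵒᵖ] {M : Type*}
    [AddCommGroup M] [Module Rᵐᵒᵖ M] (hM : IsMininjective R M) :
    IsMinFlat R (CharacterModule M) := by
  refine isMinFlat_of_forall_exists_sum fun a ha χ haχ => ?_
  obtain ⟨n, b, hb⟩ := Submodule.fg_iff_exists_fin_generating_family.1
    (IsNoetherian.noetherian (Ideal.torsionOf Rᵐᵒᵖ R a))
  have hab : ∀ i, a * unop (b i) = 0 := fun i => by
    have hbi : b i ∈ Ideal.torsionOf Rᵐᵒᵖ R a := hb ▸ Submodule.subset_span ⟨i, rfl⟩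
    exact hbi
  obtain ⟨ψ, hψ⟩ := exists_character_eq_sum_comp
    (fun i => DistribSMul.toAddMonoidHom M (b i)) χ fun m hm => by
      have hle : Ideal.torsionOf Rᵐᵒᵖ R a ≤ Ideal.torsionOf Rᵐᵒᵖ M m :=
        hb ▸ Submodule.span_le.2 (Set.range_subset_iff.2 hm)
      obtain ⟨y, rfl⟩ := isMininjective_iff.1 hM a ha m fun r hr => hle (x := op r) hr
      exact DFunLike.congr_fun haχ y
  refine ⟨n, fun i => unop (b i), ψ, hab, DFunLike.ext _ _ fun m => ?_⟩
  rw [hψ]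
  exact AddMonoidHom.finsetSum_apply _ _ _

lemma exists_sum_smul_eq_and_sum_mul_eq_zero {S P ι : Type*} [Ring S] [AddCommGroup P]
    [Module S P] [Module.Projective S P] [Fintype ι] (a : ι → S) (x : ι → P)
    (h : ∑ i, a i • x i = 0) :
    ∃ (T : Finset P) (s : ι → P → S),
      (∀ i, ∑ y ∈ T, s i y • y = x i) ∧ ∀ y, ∑ i, a i * s i y = 0 := by
  classical
  obtain ⟨s, hs⟩ := Module.projective_def.1 ‹Module.Projective S P›
  refine ⟨Finset.univ.biUnion fun i => (s (x i)).support, fun i => s (x i), fun i => ?_,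
    fun y => ?_⟩
  · rw [← Finsupp.sum_of_support_subset (s (x i)) (Finset.subset_biUnion_of_mem
      (fun i => (s (x i)).support) (Finset.mem_univ i)) (fun y c => c • y) (by simp)]
    exact hs (x i)
  · simpa [Finsupp.finsetSum_apply] using DFunLike.congr_fun (congrArg s h) y

lemma injective_of_projective_characterModule [IsNoetherianRing Rᵐᵒᵖ] {M : Type u}
    [AddCommGroup M] [Module Rᵐᵒᵖ M] [Module.Projective R (CharacterModule M)] :
    Module.Injective Rᵐᵒᵖ M := by
  refine Module.Baer.injective fun I g => ?_
  obtain ⟨n, a, ha⟩ := Module.Finite.exists_fin (R := Rᵐᵒᵖ) (M := I)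
  obtain ⟨m, hm⟩ := exists_eq_of_forall_sum_character_eq_zero
    (fun i => DistribSMul.toAddMonoidHom M (a i : Rᵐᵒᵖ)) (fun i => g (a i)) fun ψ hψ => by
      have hrel : ∑ i, unop (a i : Rᵐᵒᵖ) • ψ i = 0 :=
        DFunLike.ext _ _ fun m => (AddMonoidHom.finsetSum_apply _ _ m).trans (hψ m)
      obtain ⟨T, s, hs, has⟩ := exists_sum_smul_eq_and_sum_mul_eq_zero _ _ hrel
      have hsa : ∀ χ, ∑ i, op (s i χ) • a i = 0 := fun χ => Subtype.ext <| by
        simpa using congrArg op (has χ)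
      calc ∑ i, ψ i (g (a i)) = ∑ i, ∑ χ ∈ T, χ (g (op (s i χ) • a i)) := by
            refine Finset.sum_congr rfl fun i _ => ?_
            rw [← hs i]
            simp only [map_smul]
            exact AddMonoidHom.finsetSum_apply _ _ _
        _ = ∑ χ ∈ T, χ (g (∑ i, op (s i χ) • a i)) := by
            rw [Finset.sum_comm]
            simp only [map_sum]
        _ = 0 := Finset.sum_eq_zero fun χ _ => by rw [hsa, map_zero, map_zero]
  have hg : LinearMap.toSpanSingleton Rᵐᵒᵖ M m ∘ₗ I.subtype = g :=
    LinearMap.ext_on_range ha hm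
  exact ⟨LinearMap.toSpanSingleton Rᵐᵒᵖ M m, fun x hx => LinearMap.congr_fun hg ⟨x, hx⟩⟩

lemma isMininjective_characterModule_of_isMinFlat {M : Type*} [AddCommGroup M] [Module R M]
    (hM : IsMinFlat R M) : IsMininjective R (CharacterModule M) := by
  intro I hI f
  let F : TensorProduct ℤ I M →+ AddCircle (1 : ℚ) :=
    TensorProduct.liftAddHom (f.toAddMonoidHom : I →+ (M →+ AddCircle (1 : ℚ))) fun n x m =>
      (DFunLike.congr_fun (map_zsmul f n x) m).trans (map_zsmul (f x) n m).symm
  have hF_tmul : ∀ x m, F (x ⊗ₜ m) = f x m := fun _ _ => rfl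
  have hF : minflatBalance R M I ≤ LinearMap.ker (F.toIntLinearMap) := by
    refine Submodule.span_le.2 ?_
    rintro _ ⟨x, r, m, rfl⟩
    change F ((op r • x) ⊗ₜ[ℤ] m - x ⊗ₜ[ℤ] (r • m)) = 0
    rw [map_sub, hF_tmul, hF_tmul, sub_eq_zero]
    exact DFunLike.congr_fun (f.map_smul (op r) x) m
  obtain ⟨χ, hχ : ∀ t, _ = F t⟩ := exists_character_comp_eq (minflatAux R M I) F fun t ht =>
    hF <| (Submodule.Quotient.mk_eq_zero _).1 <|
      (injective_iff_map_eq_zero _).1 (hM I hI) (Submodule.Quotient.mk t) ht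
  refine ⟨LinearMap.toSpanSingleton Rᵐᵒᵖ _ χ ∘ₗ (opLinearEquiv Rᵐᵒᵖ).toLinearMap,
    fun x => DFunLike.ext _ _ fun m => ?_⟩
  exact (congrArg χ (minflatAux_tmul I x m)).symm.trans (hχ (x ⊗ₜ m))

section Projectivity

variable {F M : Type*} [AddCommGroup F] [Module R F] [AddCommGroup M] [Module R M]

lemma ker_inf_smul_top_le_smul_ker (hM : Module.Baer Rᵐᵒᵖ (CharacterModule M)) {p : F →ₗ[R] M}
    (hp : Function.Surjective p) (J : Ideal R) :
    LinearMap.ker p ⊓ J • ⊤ ≤ J • LinearMap.ker p := by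
  rintro y ⟨hpy, hyJ⟩
  by_contra hy
  obtain ⟨χ, hχ, hχy⟩ := exists_character_vanishing_on (J • LinearMap.ker p).toAddSubgroup hy
  obtain ⟨ρ, hρ⟩ := hM.extension_property (characterDual p) (characterDual_injective hp) .id
  have hχρ : ∀ x ∈ (J • ⊤ : Submodule R F), χ x = ρ χ (p x) := by
    intro x hx
    refine Submodule.smul_induction_on hx (fun j hj f _ => ?_) fun x y hx hy => by
      rw [map_add, map_add, map_add, hx, hy]
    -- `χ · j` vanishes on `ker p`, so it comes from a character of `M`, which `ρ` recovers.
    obtain ⟨ψ, hψ⟩ := exists_character_comp_eq p.toAddMonoidHom (op j • χ) fun k hk =>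
      hχ _ (Submodule.smul_mem_smul hj hk)
    have hρψ : op j • ρ χ = ψ := by
      have hdual : characterDual p ψ = op j • χ := DFunLike.ext _ _ hψ
      rw [← map_smul, ← hdual]
      exact LinearMap.congr_fun hρ ψ
    calc χ (j • f) = ψ (p f) := (hψ f).symm
      _ = ρ χ (j • p f) := by rw [← hρψ, character_op_smul_apply, unop_op]
      _ = ρ χ (p (j • f)) := congrArg (ρ χ) (p.map_smul j f).symm
  exact hχy (by rw [hχρ y hyJ, LinearMap.mem_ker.1 hpy, map_zero])

lemma projective_of_baer_characterModule (hM : Module.Baer Rᵐᵒᵖ (CharacterModule M))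
    {J : Ideal R} [J.IsTwoSided] [IsSemisimpleRing (R ⧸ J)] (hJ : IsNilpotent J) :
    Module.Projective R M := by
  refine Module.Projective.of_lifting_property'' fun p hp => ?_
  have hretract : ∃ l, l ∘ₗ (LinearMap.ker p).subtype = .id :=
    exists_retraction_of_inf_smul_top_le hJ (ker_inf_smul_top_le_smul_ker hM hp J)
  have hsplit := (Function.Exact.split_tfae' (M := LinearMap.ker p)
    (LinearMap.exact_subtype_ker_map p)).out 1 0
  exact (hsplit.1 ⟨hp, hretract⟩).2

end Projectivity

theorem projective_of_isMinFlat_of_isMininjective_imp_injective {R : Type u} [Ring R]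
    (H : ∀ (M : Type u) [AddCommGroup M] [Module Rᵐᵒᵖ M],
      IsMininjective R M → Module.Injective Rᵐᵒᵖ M)
    {M : Type u} [AddCommGroup M] [Module R M] (hM : IsMinFlat R M) : Module.Projective R M := by
  have : IsArtinianRing Rᵐᵒᵖ := isArtinianRing_op_of_isMininjective_imp_injective H
  obtain ⟨J, _, hJ, _⟩ := exists_isNilpotent_isSemisimpleRing_quotient (R := R)
  have hinj := H (CharacterModule M) (isMininjective_characterModule_of_isMinFlat hM)
  exact projective_of_baer_characterModule (Module.Baer.of_injective hinj) hJ

theorem injective_of_isMininjective_of_isMinFlat_imp_projective {R : Type u} [Ring R]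
    [IsNoetherianRing Rᵐᵒᵖ]
    (hP : ∀ (M : Type u) [AddCommGroup M] [Module R M], IsMinFlat R M → Module.Projective R M)
    {M : Type u} [AddCommGroup M] [Module Rᵐᵒᵖ M] (hM : IsMininjective R M) :
    Module.Injective Rᵐᵒᵖ M := by
  have : Module.Projective R (CharacterModule M) :=
    hP _ (isMinFlat_characterModule_of_isMininjective hM)
  exact injective_of_projective_characterModule

end CharacterModules

/-- Every mininjective right `R`-module is injective iff `R` is right
Noetherian and every min-flat left `R`-module is projective. -/
theorem mininjective_injective_iff_noetherian_minflat_projective (R : Type u) [Ring R] :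
    (∀ (M : Type u) [AddCommGroup M] [Module Rᵐᵒᵖ M],
        IsMininjective R M → Module.Injective Rᵐᵒᵖ M) ↔
      (IsNoetherian Rᵐᵒᵖ R ∧
        ∀ (M : Type u) [AddCommGroup M] [Module R M],
          IsMinFlat R M → Module.Projective R M) := by
  constructor
  · intro H
    have : IsNoetherianRing Rᵐᵒᵖ := isNoetherianRing_op_of_isMininjective_imp_injective H
    exact ⟨isNoetherian_of_linearEquiv (opLinearEquiv Rᵐᵒᵖ).symm,
      fun _ _ _ hM => projective_of_isMinFlat_of_isMininjective_imp_injective H hM⟩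
  · rintro ⟨hR, hP⟩ M _ _ hM
    have : IsNoetherianRing Rᵐᵒᵖ := isNoetherian_of_linearEquiv (opLinearEquiv Rᵐᵒᵖ)
    exact injective_of_isMininjective_of_isMinFlat_imp_projective hP hM
end

section
/- Let R be a ring such that every mininjective right R-module is injective. Then for every simple right R-module S, either S is isomorphic to a submodule of R, or S is isomorphic to a submodule of R/I for some minimal right ideal I of R. -/
universe u v w v'

open MulOpposite

/-!
If `S` does not embed in `R`, then no minimal right ideal maps nontrivially to `S`, so `S` is
mininjective, hence injective. Let `X` be the direct sum of copies of `R` and of the `R ⧸ I` with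
`I` minimal, indexed by all homomorphisms into `S`, and let `E` be a mininjective essential
extension of `X`. By injectivity of `S` the tautological map `X → S` extends to `φ : E → S`.
Every map `R ⧸ I → S` lifts through `φ`, which makes `ker φ` mininjective, hence injective.
So `φ` splits and `S` embeds in `E`; by essentiality it embeds in `X`, hence in one of the summands.

The extension `E` need not be an injective hull: if `X ≤ Q` with `Q` injective and `T` is maximal
among the submodules of `Q` disjoint from `X`, then `Q ⧸ T` is an essential extension of `X`, and a
map from a simple module to it has its image in `X`, so it lifts to `Q` and can be extended there.
-/

/-- The module `M` is mininjective relative to the module `P`: every homomorphism from a simple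
submodule of `P` into `M` extends to `P`. For `A = Rᵐᵒᵖ` and `P = R` this is
`IsMininjective R M`. -/
def IsMininjectiveRelTo (A : Type*) [Ring A] (P M : Type*) [AddCommGroup P] [Module A P]
    [AddCommGroup M] [Module A M] : Prop :=
  ∀ I : Submodule A P, IsAtom I → ∀ f : I →ₗ[A] M, ∃ g : P →ₗ[A] M, ∀ x : I, g x = f x

theorem exists_maximal_disjoint {L : Type*} [CompleteLattice L] [IsCompactlyGenerated L] (a : L) :
    ∃ b, Maximal (Disjoint a) b :=
  zorn_le₀ {b | Disjoint a b} fun c hc hchain ↦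
    ⟨sSup c, hchain.directedOn.disjoint_sSup_right.2 hc, fun _ ↦ le_sSup⟩

section Modules

variable {A : Type*} [Ring A]
variable {P M N S : Type*} [AddCommGroup P] [Module A P] [AddCommGroup M] [Module A M]
  [AddCommGroup N] [Module A N] [AddCommGroup S] [Module A S]

theorem le_map_mkQ_of_isAtom_of_maximal_disjoint {X T : Submodule A M}
    (hT : Maximal (Disjoint X) T) {U : Submodule A (M ⧸ T)} (hU : IsAtom U) : U ≤ X.map T.mkQ := by
  have hmeet : ¬ Disjoint X (U.comap T.mkQ) := fun hdisj ↦ by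
    have hle : U.comap T.mkQ ≤ T := hT.2 hdisj (T.le_comap_mkQ U)
    refine hU.1 (eq_bot_iff.2 ?_)
    rw [← Submodule.map_comap_eq_of_surjective T.mkQ_surjective U, ← T.mkQ_map_self]
    exact Submodule.map_mono hle
  rw [← hU.not_disjoint_iff_le]
  contrapose! hmeet
  rw [Submodule.disjoint_def] at hmeet ⊢
  intro x hxX hxU
  have hxT : x ∈ T := (Submodule.Quotient.mk_eq_zero T).1 (hmeet _ hxU ⟨x, hxX, rfl⟩)
  exact Submodule.disjoint_def.1 hT.1 x hxX hxT

theorem range_le_of_forall_isAtom_le [IsSimpleModule A S] {X : Submodule A M}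
    (hX : ∀ U : Submodule A M, IsAtom U → U ≤ X) (f : S →ₗ[A] M) : LinearMap.range f ≤ X := by
  rcases f.injective_or_eq_zero with hf | rfl
  · have : IsSimpleModule A (LinearMap.range f) := .congr (LinearEquiv.ofInjective f hf).symm
    exact hX _ IsSimpleModule.isAtom
  · simp only [LinearMap.range_zero, bot_le]

theorem exists_comp_eq_of_range_le {i : M →ₗ[A] N} (hi : Function.Injective i) {f : P →ₗ[A] N}
    (hf : LinearMap.range f ≤ LinearMap.range i) : ∃ g : P →ₗ[A] M, i ∘ₗ g = f := by
  let e := LinearEquiv.ofInjective i hi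
  let f' := f.codRestrict (LinearMap.range i) fun x ↦ hf ⟨x, rfl⟩
  exact ⟨e.symm ∘ₗ f', LinearMap.ext fun x ↦ congrArg Subtype.val (e.apply_symm_apply (f' x))⟩

theorem exists_component_comp_injective [IsSimpleModule A S] {ι : Type*} {F : ι → Type*}
    [∀ i, AddCommGroup (F i)] [∀ i, Module A (F i)] {f : S →ₗ[A] DirectSum ι F}
    (hf : Function.Injective f) :
    ∃ i, Function.Injective (DirectSum.component A ι F i ∘ₗ f) := by
  by_contra! hnot
  have hcomp (i : ι) : DirectSum.component A ι F i ∘ₗ f = 0 :=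
    (LinearMap.injective_or_eq_zero _).resolve_left (hnot i)
  have hzero : f = 0 :=
    LinearMap.ext fun x ↦ DirectSum.ext_component A fun i ↦ LinearMap.congr_fun (hcomp i) x
  have := IsSimpleModule.nontrivial A S
  obtain ⟨s, hs⟩ := exists_ne (0 : S)
  exact hs (hf (by rw [hzero, LinearMap.zero_apply, LinearMap.zero_apply]))

theorem exists_injective_of_ker_retraction {φ : M →ₗ[A] N} (hφ : Function.Surjective φ)
    {r : M →ₗ[A] LinearMap.ker φ} (hr : ∀ x : LinearMap.ker φ, r x = x) :
    ∃ σ : N →ₗ[A] M, Function.Injective σ := by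
  let e : N ≃ₗ[A] LinearMap.ker r := (φ.quotKerEquivOfSurjective hφ).symm ≪≫ₗ
    Submodule.quotientEquivOfIsCompl _ _ (LinearMap.isCompl_of_proj hr)
  exact ⟨(LinearMap.ker r).subtype ∘ₗ e, Subtype.val_injective.comp e.injective⟩

theorem isMininjectiveRelTo_of_forall_not_injective [IsSimpleModule A S]
    (hS : ∀ f : S →ₗ[A] P, ¬ Function.Injective f) : IsMininjectiveRelTo A P S := by
  intro I hI f
  have : IsSimpleModule A I := isSimpleModule_iff_isAtom.2 hI
  rcases f.bijective_or_eq_zero with hf | rfl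
  · let e := LinearEquiv.ofBijective f hf
    exact absurd (Subtype.val_injective.comp e.symm.injective) (hS (I.subtype ∘ₗ e.symm))
  · exact ⟨0, fun _ ↦ rfl⟩

theorem IsMininjectiveRelTo.ker (hM : IsMininjectiveRelTo A P M) {φ : M →ₗ[A] N}
    (hlift : ∀ I : Submodule A P, IsAtom I → ∀ k : (P ⧸ I) →ₗ[A] N,
      ∃ c : (P ⧸ I) →ₗ[A] M, φ ∘ₗ c = k) :
    IsMininjectiveRelTo A P (LinearMap.ker φ) := by
  intro I hI f
  obtain ⟨g, hg⟩ := hM I hI ((LinearMap.ker φ).subtype ∘ₗ f)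
  have hvanish : I ≤ LinearMap.ker (φ ∘ₗ g) := fun x hx ↦ by
    rw [LinearMap.mem_ker, LinearMap.comp_apply, hg ⟨x, hx⟩]
    exact (f ⟨x, hx⟩).2
  obtain ⟨c, hc⟩ := hlift I hI (I.liftQ (φ ∘ₗ g) hvanish)
  -- Subtracting a lift of the map induced by `φ ∘ g` moves `g` into `ker φ` without changing it
  -- on `I`.
  have hker (x : P) : (g - c ∘ₗ I.mkQ) x ∈ LinearMap.ker φ := by
    have hcx : φ (c (I.mkQ x)) = φ (g x) := LinearMap.congr_fun hc (I.mkQ x)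
    rw [LinearMap.mem_ker, LinearMap.sub_apply, map_sub, LinearMap.comp_apply, hcx, sub_self]
  refine ⟨(g - c ∘ₗ I.mkQ).codRestrict _ hker, fun x ↦ Subtype.ext ?_⟩
  have hx : I.mkQ (x : P) = 0 := (Submodule.Quotient.mk_eq_zero I).2 x.2
  rw [LinearMap.codRestrict_apply, LinearMap.sub_apply, LinearMap.comp_apply, hx, map_zero,
    sub_zero]
  exact hg x

end Modules

section EnoughInjectives

variable {A : Type u} [Ring A] [Small.{v} A]

theorem exists_injective_module_extension (X : Type v) [AddCommGroup X] [Module A X] :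
    ∃ (Q : Type v) (_ : AddCommGroup Q) (_ : Module A Q) (j : X →ₗ[A] Q),
      Module.Injective A Q ∧ Function.Injective j := by
  obtain ⟨⟨Q, hQ, j, hj⟩⟩ := CategoryTheory.EnoughInjectives.presentation (ModuleCat.of A X)
  exact ⟨Q, inferInstance, inferInstance, j.hom,
    Module.injective_module_of_injective_object A Q, (ModuleCat.mono_iff_injective j).1 hj⟩

theorem exists_mininjective_extension (X : Type v) [AddCommGroup X] [Module A X] :
    ∃ (E : Type v) (_ : AddCommGroup E) (_ : Module A E) (i : X →ₗ[A] E), Function.Injective i ∧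
      (∀ (P : Type v) [AddCommGroup P] [Module A P], IsMininjectiveRelTo A P E) ∧
      ∀ (S : Type v) [AddCommGroup S] [Module A S] [IsSimpleModule A S] (f : S →ₗ[A] E),
        ∃ g : S →ₗ[A] X, i ∘ₗ g = f := by
  obtain ⟨Q, _, _, j, hQ, hj⟩ := exists_injective_module_extension (A := A) X
  obtain ⟨T, hT⟩ := exists_maximal_disjoint (LinearMap.range j)
  let i : X →ₗ[A] Q ⧸ T := T.mkQ ∘ₗ j
  have hi : Function.Injective i := by
    refine (injective_iff_map_eq_zero i).2 fun x hx ↦ (injective_iff_map_eq_zero j).1 hj x ?_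
    exact Submodule.disjoint_def.1 hT.1 (j x) ⟨x, rfl⟩ ((Submodule.Quotient.mk_eq_zero T).1 hx)
  have hatoms (U : Submodule A (Q ⧸ T)) (hU : IsAtom U) : U ≤ LinearMap.range i :=
    LinearMap.range_comp j T.mkQ ▸ le_map_mkQ_of_isAtom_of_maximal_disjoint hT hU
  have hfactor (S : Type v) [AddCommGroup S] [Module A S] [IsSimpleModule A S]
      (f : S →ₗ[A] Q ⧸ T) : ∃ g : S →ₗ[A] X, i ∘ₗ g = f :=
    exists_comp_eq_of_range_le hi (range_le_of_forall_isAtom_le hatoms f)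
  refine ⟨Q ⧸ T, inferInstance, inferInstance, i, hi, fun P _ _ I hI f ↦ ?_, hfactor⟩
  have : IsSimpleModule A I := isSimpleModule_iff_isAtom.2 hI
  obtain ⟨g, rfl⟩ := hfactor I f
  obtain ⟨k, hk⟩ := hQ.out I.subtype Subtype.val_injective (j ∘ₗ g)
  exact ⟨T.mkQ ∘ₗ k, fun x ↦ congrArg T.mkQ (hk x)⟩

theorem exists_mininjective_lifting_of_injective {ι : Type v} (F : ι → Type v)
    [∀ i, AddCommGroup (F i)] [∀ i, Module A (F i)] (S : Type v) [AddCommGroup S] [Module A S]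
    [IsSimpleModule A S] (hS : Module.Injective A S) :
    ∃ (E : Type v) (_ : AddCommGroup E) (_ : Module A E) (φ : E →ₗ[A] S),
      (∀ (P : Type v) [AddCommGroup P] [Module A P], IsMininjectiveRelTo A P E) ∧
      (∀ (i : ι) (k : F i →ₗ[A] S), ∃ c : F i →ₗ[A] E, φ ∘ₗ c = k) ∧
      ∀ σ : S →ₗ[A] E, Function.Injective σ →
        ∃ (i : ι) (f : S →ₗ[A] F i), Function.Injective f := by
  classical
  let J := Σ i, F i →ₗ[A] S
  let F' (j : J) := F j.1
  obtain ⟨E, _, _, e, he, hE, hfactor⟩ := exists_mininjective_extension (A := A) (DirectSum J F')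
  obtain ⟨φ, hφ⟩ := hS.out e he (DirectSum.toModule A J S fun j ↦ j.2)
  have hlift (j : J) : φ ∘ₗ e ∘ₗ DirectSum.lof A J F' j = j.2 :=
    LinearMap.ext fun x ↦ (hφ _).trans (DirectSum.toModule_lof A j x)
  refine ⟨E, inferInstance, inferInstance, φ, hE, fun i k ↦ ⟨_, hlift ⟨i, k⟩⟩, fun σ hσ ↦ ?_⟩
  obtain ⟨g, rfl⟩ := hfactor S σ
  obtain ⟨j, hj⟩ := exists_component_comp_injective (Function.Injective.of_comp hσ)
  exact ⟨j.1, _, hj⟩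

theorem simple_embeds_of_mininjective_injective_general {P : Type v} [AddCommGroup P] [Module A P]
    (h : ∀ (M : Type v) [AddCommGroup M] [Module A M],
      IsMininjectiveRelTo A P M → Module.Injective A M)
    {S : Type v} [AddCommGroup S] [Module A S] [IsSimpleModule A S]
    {ψ : P →ₗ[A] S} (hψ : ψ ≠ 0) :
    (∃ f : S →ₗ[A] P, Function.Injective f) ∨
      ∃ I : Submodule A P, IsAtom I ∧ ∃ f : S →ₗ[A] (P ⧸ I), Function.Injective f := by
  rw [or_iff_not_imp_left, not_exists]
  intro hSP
  have hS : Module.Injective A S := h S (isMininjectiveRelTo_of_forall_not_injective hSP)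
  -- Admitting `I = ⊥` makes `P` itself one of the quotients `P ⧸ I`.
  obtain ⟨E, _, _, φ, hE, hlift, hembed⟩ := exists_mininjective_lifting_of_injective
    (fun I : {I : Submodule A P // I = ⊥ ∨ IsAtom I} ↦ P ⧸ I.1) S hS
  let e : (P ⧸ (⊥ : Submodule A P)) ≃ₗ[A] P := Submodule.quotEquivOfEqBot ⊥ rfl
  have hφ : Function.Surjective φ := by
    obtain ⟨c, hc⟩ := hlift ⟨⊥, .inl rfl⟩ (ψ ∘ₗ e)
    refine LinearMap.surjective_of_ne_zero fun hφ0 ↦ hψ ((LinearMap.cancel_right e.surjective).1 ?_)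
    rw [← hc, hφ0, LinearMap.zero_comp, LinearMap.zero_comp]
  have hker : Module.Injective A (LinearMap.ker φ) :=
    h _ ((hE P).ker fun I hI ↦ hlift ⟨I, .inr hI⟩)
  obtain ⟨r, hr⟩ := hker.out (LinearMap.ker φ).subtype Subtype.val_injective LinearMap.id
  obtain ⟨σ, hσ⟩ := exists_injective_of_ker_retraction hφ hr
  obtain ⟨⟨I, rfl | hI⟩, f, hf⟩ := hembed σ hσ
  · exact absurd (e.injective.comp hf) (hSP (e.toLinearMap ∘ₗ f))
  · exact ⟨I, hI, f, hf⟩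

end EnoughInjectives

theorem exists_linearMap_ne_zero (R M : Type*) [Ring R] [AddCommGroup M] [Module Rᵐᵒᵖ M]
    [Nontrivial M] : ∃ ψ : R →ₗ[Rᵐᵒᵖ] M, ψ ≠ 0 := by
  obtain ⟨m, hm⟩ := exists_ne (0 : M)
  let ψ : R →ₗ[Rᵐᵒᵖ] M :=
    { toFun r := op r • m
      map_add' a b := by rw [op_add, add_smul]
      map_smul' a b := mul_smul a (op b) m }
  exact ⟨ψ, fun hψ ↦ hm ((one_smul Rᵐᵒᵖ m).symm.trans (LinearMap.congr_fun hψ 1))⟩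

/-- If every mininjective right `R`-module is injective, then every simple
right `R`-module embeds in `R` or in `R/I` for some minimal right ideal `I` of `R`. -/
theorem simple_embeds_of_mininjective_injective (R : Type u) [Ring R]
    (h : ∀ (M : Type u) [AddCommGroup M] [Module Rᵐᵒᵖ M],
        IsMininjective R M → Module.Injective Rᵐᵒᵖ M)
    (S : Type u) [AddCommGroup S] [Module Rᵐᵒᵖ S] (hS : IsSimpleModule Rᵐᵒᵖ S) :
    (∃ f : S →ₗ[Rᵐᵒᵖ] R, Function.Injective f) ∨
      ∃ I : Submodule Rᵐᵒᵖ R, IsAtom I ∧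
        ∃ f : S →ₗ[Rᵐᵒᵖ] (R ⧸ I), Function.Injective f := by
  have := IsSimpleModule.nontrivial Rᵐᵒᵖ S
  obtain ⟨ψ, hψ⟩ := exists_linearMap_ne_zero R S
  exact simple_embeds_of_mininjective_injective_general h hψ
end
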